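/- arXiv:1708.05343 — 2 statements merged into one kernel-verified Lean document; each statement's English description precedes it below -/
import Mathlib

section
/- Let μ be a non-degenerate probability measure on ℝ with finite second moment, mean ∫x dμ = β and variance ∫(x−β)² dμ = α > 0. Then there exists a probability measure ω on ℝ such that for every z in the upper half-plane ℂ⁺, G_μ(z) = 1/(z − β − α·G_ω(z)); equivalently, F_μ(z) = z − β − α/F_ω(z) where F_μ = 1/G_μ. -/
open MeasureTheory

noncomputable section
/-- The Cauchy–Stieltjes transform `G_μ(z) = ∫ (z − x)⁻¹ dμ(x)`. -/
def cauchyG (μ : Measure ℝ) (z : ℂ) : ℂ := ∫ x, (z - (x : ℂ))⁻¹ ∂μ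

theorem schur_aux {V : Type*} [NormedAddCommGroup V] [InnerProductSpace ℂ V]
    [FiniteDimensional ℂ V] (T : V →ₗ[ℂ] V) (hT : T.IsSymmetric) (e : V) (he : ‖e‖ = 1)
    (β : ℝ) (hβ : inner ℂ e (T e) = (β : ℂ)) :
    ∃ (n : ℕ) (l w : Fin n → ℝ), (∀ j, 0 ≤ w j) ∧ ∑ j, w j = ‖T e - (β : ℂ) • e‖ ^ 2 ∧
      ∀ (z : ℂ) (u : V), 0 < z.im → z • u - T u = e →
        inner ℂ e u * (z - β - ∑ j, (w j : ℂ) * (z - (l j : ℂ))⁻¹) = 1 := by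
  have hee : inner ℂ e e = (1 : ℂ) := by
    rw [inner_self_eq_norm_sq_to_K, he]; simp
  let K : Submodule ℂ V := (ℂ ∙ e)ᗮ
  have hK : ∀ x : V, x ∈ K ↔ inner ℂ e x = (0 : ℂ) := fun x =>
    Submodule.mem_orthogonal_singleton_iff_inner_right
  let TK : K →ₗ[ℂ] K := (K.orthogonalProjectionOnto : V →ₗ[ℂ] K) ∘ₗ T ∘ₗ K.subtype
  have hTK : TK.IsSymmetric := by
    intro x y
    simp only [TK, LinearMap.comp_apply, Submodule.subtype_apply, ContinuousLinearMap.coe_coe]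
    rw [Submodule.inner_orthogonalProjectionOnto_eq_of_mem_right,
      Submodule.inner_orthogonalProjectionOnto_eq_of_mem_left]
    exact hT x y
  have hTKi : ∀ x y : K, inner ℂ (TK x) y = inner ℂ (T x) (y : V) := by
    intro x y
    simp only [TK, LinearMap.comp_apply, Submodule.subtype_apply, ContinuousLinearMap.coe_coe]
    rw [Submodule.inner_orthogonalProjectionOnto_eq_of_mem_right]
  let b := hTK.eigenvectorBasis rfl
  let l := hTK.eigenvalues rfl
  have hv : T e - (β : ℂ) • e ∈ K := by
    rw [hK, inner_sub_right, inner_smul_right, hee, hβ]; simp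
  let v : K := ⟨_, hv⟩
  refine ⟨_, l, fun j => ‖inner ℂ (b j) v‖ ^ 2, fun j => by positivity, ?_, ?_⟩
  · rw [OrthonormalBasis.sum_sq_norm_inner_right]; rfl
  intro z u hz hu
  set s : ℂ := inner ℂ e u with hs
  have hk : u - s • e ∈ K := by
    rw [hK, inner_sub_right, inner_smul_right, hee, hs]; simp
  let k : K := ⟨_, hk⟩
  have hTe : T e = (v : V) + (β : ℂ) • e := by simp [v]
  have huk : u = (k : V) + s • e := by simp [k]
  have hje : ∀ x : K, inner ℂ (x : V) e = (0 : ℂ) := fun x => by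
    rw [← inner_conj_symm, (hK _).1 x.2]; simp
  have hej : ∀ x : K, inner ℂ e (x : V) = (0 : ℂ) := fun x => (hK _).1 x.2
  have h1 : ∀ j, (z - l j) * inner ℂ (b j) k = s * inner ℂ (b j) v := by
    intro j
    have h := congrArg (fun x => inner ℂ ((b j : K) : V) x) hu
    simp only [inner_sub_right, inner_smul_right, hje] at h
    rw [← hT, huk, inner_add_right, inner_smul_right, hje, inner_add_right, ← hTKi,
      inner_smul_right, hT (b j : V) e, hTe, inner_add_right, inner_smul_right, hje] at h
    rw [show TK (b j) = (l j : ℂ) • b j from hTK.apply_eigenvectorBasis rfl j, inner_smul_left] at h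
    simp only [Submodule.coe_inner, Complex.conj_ofReal] at h ⊢
    linear_combination h
  have h2 : z * s - (β * s + ∑ j, inner ℂ v (b j) * inner ℂ (b j) k) = 1 := by
    have h := congrArg (fun x => inner ℂ e x) hu
    simp only [inner_sub_right, inner_smul_right, hee] at h
    rw [← hT, hTe, inner_add_left, inner_smul_left] at h
    nth_rw 2 [huk] at h
    rw [inner_add_right, inner_smul_right, hje] at h
    rw [OrthonormalBasis.sum_inner_mul_inner]
    simp only [Submodule.coe_inner, Complex.conj_ofReal, ← hs] at h ⊢
    linear_combination h
  have hzl : ∀ j, z - (l j : ℂ) ≠ 0 := by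
    intro j h
    have := congrArg Complex.im h
    simp at this
    linarith
  have h3 : ∑ j, inner ℂ v (b j) * inner ℂ (b j) k
      = s * ∑ j, ((‖inner ℂ (b j) v‖ ^ 2 : ℝ) : ℂ) * (z - (l j : ℂ))⁻¹ := by
    rw [Finset.mul_sum]
    refine Finset.sum_congr rfl fun j _ => ?_
    have : inner ℂ (b j) k = s * inner ℂ (b j) v * (z - l j)⁻¹ := by
      rw [← h1 j]; field_simp [hzl j]
    rw [this]
    have h4 : ((‖inner ℂ (b j) v‖ ^ 2 : ℝ) : ℂ) = inner ℂ v (b j) * inner ℂ (b j) v := by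
      rw [← inner_conj_symm v (b j), Complex.conj_mul']; simp
    rw [h4]; ring
  rw [h3] at h2
  linear_combination h2

theorem finite_case {ι : Type*} [Fintype ι] (p s : ι → ℝ) (hp : ∀ i, 0 ≤ p i)
    (hp1 : ∑ i, p i = 1) (α β : ℝ) (hβ : ∑ i, p i * s i = β)
    (hα : ∑ i, p i * (s i - β) ^ 2 = α) (hα0 : 0 < α) :
    ∃ ω : Measure ℝ, IsProbabilityMeasure ω ∧
      ∀ z : ℂ, 0 < z.im →
        (∑ i, (p i : ℂ) * (z - s i)⁻¹) * (z - (β : ℂ) - (α : ℂ) * cauchyG ω z) = 1 := by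
  let T : EuclideanSpace ℂ ι →ₗ[ℂ] EuclideanSpace ℂ ι :=
    { toFun := fun v => WithLp.toLp 2 fun i => (s i : ℂ) * v i
      map_add' := by intro x y; ext i; simp [mul_add]
      map_smul' := by intro c x; ext i; simp; ring }
  have hTa : ∀ v i, T v i = (s i : ℂ) * v i := fun _ _ => rfl
  let e : EuclideanSpace ℂ ι := WithLp.toLp 2 fun i => ((Real.sqrt (p i) : ℝ) : ℂ)
  have hea : ∀ i, e i = ((Real.sqrt (p i) : ℝ) : ℂ) := fun _ => rfl
  have hsq : ∀ i, ((Real.sqrt (p i) : ℝ) : ℂ) * ((Real.sqrt (p i) : ℝ) : ℂ) = p i := by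
    intro i
    rw [← Complex.ofReal_mul, Real.mul_self_sqrt (hp i)]
  have hTs : T.IsSymmetric := by
    intro x y
    simp only [PiLp.inner_apply, hTa, RCLike.inner_apply, map_mul, Complex.conj_ofReal]
    exact Finset.sum_congr rfl fun i _ => by ring
  have he : ‖e‖ = 1 := by
    rw [EuclideanSpace.norm_eq]
    simp [hea, Real.sq_sqrt, hp, hp1]
  have heb : inner ℂ e (T e) = (β : ℂ) := by
    simp only [PiLp.inner_apply, hTa, RCLike.inner_apply, hea, Complex.conj_ofReal]
    rw [← hβ]; push_cast
    exact Finset.sum_congr rfl fun i _ => by rw [← hsq i]; ring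
  obtain ⟨n, l, w, hw, hws, H⟩ := schur_aux T hTs e he β heb
  have hn : ‖T e - (β : ℂ) • e‖ ^ 2 = α := by
    rw [EuclideanSpace.norm_sq_eq, ← hα]
    refine Finset.sum_congr rfl fun i _ => ?_
    have : (T e - (β : ℂ) • e) i = (((s i - β) * Real.sqrt (p i) : ℝ) : ℂ) := by
      simp [hTa, hea]; ring
    rw [this, Complex.norm_real, Real.norm_eq_abs, sq_abs, mul_pow, Real.sq_sqrt (hp i)]
    ring
  rw [hn] at hws
  let ω : Measure ℝ := ∑ j, ENNReal.ofReal (w j / α) • Measure.dirac (l j)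
  have hω : IsProbabilityMeasure ω := by
    constructor
    simp only [ω, Measure.coe_finsetSum, Finset.sum_apply, Measure.smul_apply, measure_univ,
      smul_eq_mul, mul_one]
    rw [← ENNReal.ofReal_sum_of_nonneg (fun j _ => by have := hw j; positivity),
      ← Finset.sum_div, hws, div_self hα0.ne', ENNReal.ofReal_one]
  refine ⟨ω, hω, fun z hz => ?_⟩
  have hG : (α : ℂ) * cauchyG ω z = ∑ j, (w j : ℂ) * (z - (l j : ℂ))⁻¹ := by
    unfold cauchyG
    simp only [ω]
    rw [integral_finsetSum_measure]
    · simp only [integral_smul_measure, integral_dirac, Finset.mul_sum]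
      refine Finset.sum_congr rfl fun j _ => ?_
      have := hw j
      have hα' : (α : ℂ) ≠ 0 := by exact_mod_cast hα0.ne'
      rw [ENNReal.toReal_ofReal (by positivity), Complex.real_smul]
      push_cast
      field_simp
    · intro j _
      exact (integrable_dirac (by simp)).smul_measure ENNReal.ofReal_ne_top
  have hzl : ∀ j, z - (s j : ℂ) ≠ 0 := by
    intro j h
    have := congrArg Complex.im h
    simp at this
    linarith
  let u : EuclideanSpace ℂ ι := WithLp.toLp 2 fun i => e i * (z - s i)⁻¹
  have hua : ∀ i, u i = e i * (z - s i)⁻¹ := fun _ => rfl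
  have := H z u hz (by
    ext i
    simp only [PiLp.sub_apply, PiLp.smul_apply, hTa, hua, smul_eq_mul]
    have := hzl i
    field_simp)
  rw [hG, ← this]
  congr 1
  simp only [PiLp.inner_apply, RCLike.inner_apply, hua, hea, Complex.conj_ofReal]
  exact Finset.sum_congr rfl fun i _ => by rw [← hsq i]; ring

open Filter Topology

theorem sub_ofReal_ne {z : ℂ} (hz : 0 < z.im) (x : ℝ) : z - (x : ℂ) ≠ 0 := by
  intro h
  have := congrArg Complex.im h
  simp at this
  linarith

theorem norm_inv_le {z : ℂ} (hz : 0 < z.im) (x : ℝ) : ‖(z - (x : ℂ))⁻¹‖ ≤ z.im⁻¹ := by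
  rw [norm_inv]
  apply inv_anti₀ hz
  have := Complex.abs_im_le_norm (z - (x : ℂ))
  simp at this
  exact (le_abs_self _).trans this

theorem cont_inv {z : ℂ} (hz : 0 < z.im) : Continuous fun x : ℝ => (z - (x : ℂ))⁻¹ :=
  Continuous.inv₀ (by fun_prop) (sub_ofReal_ne hz)

theorem integrable_inv (μ : Measure ℝ) [IsProbabilityMeasure μ] {z : ℂ} (hz : 0 < z.im) :
    Integrable (fun x : ℝ => (z - (x : ℂ))⁻¹) μ :=
  Integrable.of_bound (cont_inv hz).aestronglyMeasurable z.im⁻¹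
    (Eventually.of_forall (norm_inv_le hz))

theorem cauchyG_ne_zero (μ : Measure ℝ) [IsProbabilityMeasure μ] {z : ℂ} (hz : 0 < z.im) :
    cauchyG μ z ≠ 0 := by
  intro h
  have hi := integrable_inv μ hz
  have h1 : ∫ x : ℝ, -((z - (x : ℂ))⁻¹).im ∂μ = 0 := by
    rw [integral_neg]
    have := integral_im hi
    simp only [RCLike.im_to_complex] at this
    rw [this]
    unfold cauchyG at h
    rw [h]; simp
  have hpos : ∀ x : ℝ, 0 < -((z - (x : ℂ))⁻¹).im := by
    intro x
    have := Complex.normSq_pos.2 (sub_ofReal_ne hz x)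
    rw [Complex.inv_im]
    simp only [Complex.sub_im, Complex.ofReal_im, sub_zero]
    rw [neg_div, neg_neg]
    positivity
  have h2 : 0 < ∫ x : ℝ, -((z - (x : ℂ))⁻¹).im ∂μ := by
    rw [integral_pos_iff_support_of_nonneg (fun x => (hpos x).le) hi.im.neg]
    have : Function.support (fun x : ℝ => -((z - (x : ℂ))⁻¹).im) = Set.univ := by
      ext x; simpa using (hpos x).ne'
    rw [this]; simp
  linarith

theorem simple_integral {E : Type*} [NormedAddCommGroup E] [NormedSpace ℝ E] [CompleteSpace E]
    (μ : Measure ℝ) [IsProbabilityMeasure μ]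
    (f : SimpleFunc ℝ ℝ) (g : ℝ → E) :
    ∫ x, g (f x) ∂μ = ∑ i : f.range, μ.real (f ⁻¹' {(i : ℝ)}) • g i := by
  have h : ∀ x, g (f x) = ∑ y ∈ f.range, (f ⁻¹' {y}).indicator (fun _ => g y) x := by
    intro x
    rw [Finset.sum_eq_single (f x)]
    · simp
    · intro b _ hb
      simp [Set.indicator, hb.symm]
    · intro h; exact absurd (f.mem_range_self x) h
  simp_rw [h]
  rw [integral_finsetSum]
  · rw [← Finset.sum_coe_sort]
    refine Finset.sum_congr rfl fun i _ => ?_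
    rw [integral_indicator_const _ (f.measurableSet_fiber _)]
  · intro i _
    exact (integrable_const _).indicator (f.measurableSet_fiber _)

theorem simple_case (μ : Measure ℝ) [IsProbabilityMeasure μ] (f : SimpleFunc ℝ ℝ)
    (α β : ℝ) (hβ : ∫ x, f x ∂μ = β) (hα : ∫ x, (f x - β) ^ 2 ∂μ = α) (hα0 : 0 < α) :
    ∃ ω : ProbabilityMeasure ℝ, ∀ z : ℂ, 0 < z.im →
        (∫ x, (z - (f x : ℂ))⁻¹ ∂μ) * (z - (β : ℂ) - (α : ℂ) * cauchyG ω z) = 1 := by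
  obtain ⟨ω, h1, h2⟩ := finite_case (fun i : f.range => μ.real (f ⁻¹' {(i : ℝ)}))
    (fun i => (i : ℝ)) (fun _ => measureReal_nonneg)
    (by have := simple_integral μ f (fun _ => (1 : ℝ)); simpa using this.symm) α β
    (by have := simple_integral μ f (fun x => x); simpa [hβ] using this.symm)
    (by have := simple_integral μ f (fun x => (x - β) ^ 2); simpa [hα] using this.symm) hα0
  refine ⟨⟨ω, h1⟩, fun z hz => ?_⟩
  rw [simple_integral μ f (fun x => (z - (x : ℂ))⁻¹)]
  simpa using h2 z hz

theorem tail_bound (ω : Measure ℝ) [IsProbabilityMeasure ω] {r : ℝ} (hr : 0 < r) :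
    ω {x | r < ‖x‖} ≤
      ENNReal.ofReal (2 * (1 - (Complex.I * r * cauchyG ω (Complex.I * r)).re)) := by
  have hz : 0 < (Complex.I * (r : ℂ)).im := by simpa using hr
  have hi := (integrable_inv ω hz).const_mul (Complex.I * (r : ℂ))
  have hre : (Complex.I * r * cauchyG ω (Complex.I * r)).re
      = ∫ x : ℝ, (Complex.I * r * (Complex.I * r - (x : ℂ))⁻¹).re ∂ω := by
    unfold cauchyG
    rw [← integral_const_mul]
    have := integral_re hi
    simp only [RCLike.re_to_complex] at this
    exact this.symm
  have hf : ∀ x : ℝ, (Complex.I * r * (Complex.I * r - (x : ℂ))⁻¹).re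
      = r ^ 2 / (x ^ 2 + r ^ 2) := by
    intro x
    have : x ^ 2 + r ^ 2 ≠ 0 := by positivity
    simp [Complex.mul_re, Complex.inv_re, Complex.inv_im, Complex.normSq_apply]
    field_simp
  have hii : Integrable (fun x : ℝ => 2 * (1 - r ^ 2 / (x ^ 2 + r ^ 2))) ω := by
    have h := hi.re
    simp only [RCLike.re_to_complex, hf] at h
    exact ((integrable_const 1).sub h).const_mul 2
  have hnn : ∀ x : ℝ, 0 ≤ 2 * (1 - r ^ 2 / (x ^ 2 + r ^ 2)) := by
    intro x
    have : r ^ 2 / (x ^ 2 + r ^ 2) ≤ 1 := by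
      rw [div_le_one (by positivity)]; nlinarith [sq_nonneg x]
    linarith
  have hms : MeasurableSet {x : ℝ | r < ‖x‖} := measurableSet_lt measurable_const measurable_norm
  have key : ω.real {x | r < ‖x‖} ≤ ∫ x, 2 * (1 - r ^ 2 / (x ^ 2 + r ^ 2)) ∂ω := by
    rw [← integral_indicator_one hms]
    refine integral_mono ((integrable_const (1 : ℝ)).indicator hms) hii fun x => ?_
    by_cases hx : r < ‖x‖
    · have : r ^ 2 < x ^ 2 := by
        rw [Real.norm_eq_abs] at hx
        rw [← sq_abs x]; gcongr
      rw [Set.indicator_of_mem (by exact hx)]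
      have : r ^ 2 / (x ^ 2 + r ^ 2) ≤ 1 / 2 := by
        rw [div_le_div_iff₀ (by positivity) (by positivity)]; linarith
      simp only [Pi.one_apply]
      linarith
    · rw [Set.indicator_of_notMem (by exact hx)]
      exact hnn x
  have hint : ∫ x, 2 * (1 - r ^ 2 / (x ^ 2 + r ^ 2)) ∂ω
      = 2 * (1 - (Complex.I * r * cauchyG ω (Complex.I * r)).re) := by
    have h := hi.re
    simp only [RCLike.re_to_complex, hf] at h
    rw [integral_const_mul, integral_sub (integrable_const 1) h, hre]
    simp [hf]
  rw [← hint, ← ofReal_measureReal]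
  exact ENNReal.ofReal_le_ofReal key

theorem limit_lemma (ω : ℕ → ProbabilityMeasure ℝ) (h : ℂ → ℂ)
    (hlim : ∀ z : ℂ, 0 < z.im → Tendsto (fun n => cauchyG (ω n) z) atTop (𝓝 (h z)))
    (hinf : Tendsto (fun y : ℝ => Complex.I * y * h (Complex.I * y)) atTop (𝓝 1)) :
    ∃ ν : Measure ℝ, IsProbabilityMeasure ν ∧ ∀ z : ℂ, 0 < z.im → cauchyG ν z = h z := by
  have htight : IsTightMeasureSet (Set.range fun n => (ω n : Measure ℝ)) := by
    apply isTightMeasureSet_range_of_tendsto_limsup_measure_norm_gt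
    have hup : Tendsto (fun r : ℝ => ENNReal.ofReal
        (2 * (1 - (Complex.I * r * h (Complex.I * r)).re))) atTop (𝓝 0) := by
      have h1 := (Complex.continuous_re.tendsto _).comp hinf
      have h2 := ENNReal.tendsto_ofReal ((h1.const_sub 1).const_mul 2)
      simpa using h2
    refine tendsto_of_tendsto_of_tendsto_of_le_of_le' tendsto_const_nhds hup
      (Eventually.of_forall fun _ => zero_le) ?_
    filter_upwards [eventually_gt_atTop 0] with r hr
    have hz : 0 < (Complex.I * (r : ℂ)).im := by simpa using hr
    have h3 : Tendsto (fun n => ENNReal.ofReal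
        (2 * (1 - (Complex.I * r * cauchyG (ω n) (Complex.I * r)).re))) atTop
        (𝓝 (ENNReal.ofReal (2 * (1 - (Complex.I * r * h (Complex.I * r)).re)))) := by
      have h1 := (Complex.continuous_re.tendsto _).comp ((hlim _ hz).const_mul (Complex.I * r))
      exact ENNReal.tendsto_ofReal ((h1.const_sub 1).const_mul 2)
    rw [← h3.limsup_eq]
    exact limsup_le_limsup (Eventually.of_forall fun n => tail_bound _ hr)
  have hc : IsCompact (closure (Set.range ω)) := by
    apply isCompact_closure_of_isTightMeasureSet
    convert htight using 1
    ext m; simp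
  let U : Ultrafilter ℕ := hyperfilter ℕ
  have hU : (U : Filter ℕ) ≤ atTop := Nat.hyperfilter_le_atTop
  obtain ⟨ν, -, hν⟩ := hc.ultrafilter_le_nhds (U.map ω) (by
    rw [le_principal_iff]
    exact Ultrafilter.mem_map.2 (Filter.univ_mem' fun n => subset_closure ⟨n, rfl⟩))
  have hν' : Tendsto ω U (𝓝 ν) := hν
  refine ⟨ν, inferInstance, fun z hz => ?_⟩
  have hb := (ProbabilityMeasure.tendsto_iff_forall_integral_rclike_tendsto ℂ).1 hν'
    (BoundedContinuousFunction.ofNormedAddCommGroup _ (cont_inv hz) z.im⁻¹ (norm_inv_le hz))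
  exact tendsto_nhds_unique hb ((hlim z hz).mono_left hU)

theorem ratio_tendsto (x : ℝ) : Tendsto (fun y : ℝ => Complex.I * y * (Complex.I * y - (x : ℂ))⁻¹)
    atTop (𝓝 1) := by
  have h1 : Tendsto (fun y : ℝ => (x : ℂ) * (Complex.I * (y : ℂ) - x)⁻¹) atTop (𝓝 0) := by
    rw [tendsto_zero_iff_norm_tendsto_zero]
    have h2 : Tendsto (fun y : ℝ => |x| * y⁻¹) atTop (𝓝 0) := by
      simpa using tendsto_inv_atTop_zero.const_mul |x|
    refine squeeze_zero' (Eventually.of_forall fun _ => norm_nonneg _) ?_ h2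
    filter_upwards [eventually_gt_atTop 0] with y hy
    rw [norm_mul, Complex.norm_real, Real.norm_eq_abs]
    have := norm_inv_le (z := Complex.I * y) (by simpa using hy) x
    simp only [Complex.I_mul_im, Complex.ofReal_re] at this
    gcongr
  have h3 := h1.const_add 1
  rw [add_zero] at h3
  refine h3.congr' ?_
  filter_upwards [eventually_gt_atTop 0] with y hy
  have := sub_ofReal_ne (z := Complex.I * y) (by simpa using hy) x
  field_simp
  ring

theorem ratio_norm {y : ℝ} (hy : 0 < y) (x : ℝ) :
    ‖Complex.I * y * (Complex.I * y - (x : ℂ))⁻¹‖ ≤ 1 := by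
  have := norm_inv_le (z := Complex.I * y) (by simpa using hy) x
  simp only [Complex.I_mul_im, Complex.ofReal_re] at this
  rw [norm_mul, norm_mul, Complex.norm_I, one_mul, Complex.norm_real, Real.norm_eq_abs,
    abs_of_pos hy]
  calc y * _ ≤ y * y⁻¹ := by gcongr
    _ = 1 := mul_inv_cancel₀ hy.ne'

theorem weighted_tendsto (μ : Measure ℝ) [IsProbabilityMeasure μ] (g : ℝ → ℝ)
    (hg : Integrable g μ) :
    Tendsto (fun y : ℝ => ∫ x, (g x : ℂ) * (Complex.I * y * (Complex.I * y - (x : ℂ))⁻¹) ∂μ)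
      atTop (𝓝 ((∫ x, g x ∂μ : ℝ) : ℂ)) := by
  rw [show ((∫ x, g x ∂μ : ℝ) : ℂ) = ∫ x, (g x : ℂ) ∂μ from integral_ofReal.symm]
  refine tendsto_integral_filter_of_dominated_convergence (fun x => ‖g x‖) ?_ ?_ hg.norm ?_
  · filter_upwards [eventually_gt_atTop 0] with y hy
    have hz : 0 < (Complex.I * (y : ℂ)).im := by simpa using hy
    exact hg.ofReal.aestronglyMeasurable.mul
      ((cont_inv hz).aestronglyMeasurable.const_mul _)
  · filter_upwards [eventually_gt_atTop 0] with y hy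
    refine Eventually.of_forall fun x => ?_
    rw [norm_mul, Complex.norm_real]
    exact mul_le_of_le_one_right (norm_nonneg _) (ratio_norm hy x)
  · refine Eventually.of_forall fun x => ?_
    simpa using (ratio_tendsto x).const_mul (g x : ℂ)

theorem asymp (μ : Measure ℝ) [IsProbabilityMeasure μ] (α β : ℝ)
    (hi1 : Integrable (fun x : ℝ => x) μ) (hi2 : Integrable (fun x : ℝ => (x - β) ^ 2) μ)
    (hmean : (∫ x, x ∂μ) = β) (hvar : (∫ x, (x - β) ^ 2 ∂μ) = α) (hα : 0 < α) :
    Tendsto (fun y : ℝ => Complex.I * y * ((Complex.I * y - β - (cauchyG μ (Complex.I * y))⁻¹) / α))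
      atTop (𝓝 1) := by
  have hα' : (α : ℂ) ≠ 0 := by exact_mod_cast hα.ne'
  have hA := weighted_tendsto μ _ hi2
  have hB := weighted_tendsto μ (fun _ => 1) (integrable_const 1)
  rw [hvar] at hA
  have hB' : ((∫ _ : ℝ, (1 : ℝ) ∂μ : ℝ) : ℂ) = 1 := by simp
  rw [hB'] at hB
  have hC := (hA.mul (ratio_tendsto β)).div (hB.const_mul (α : ℂ)) (by simpa using hα')
  rw [mul_one, div_self hα'] at hC
  refine hC.congr' ?_
  filter_upwards [eventually_gt_atTop 0] with y hy
  have hz : 0 < (Complex.I * (y : ℂ)).im := by simpa using hy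
  set z : ℂ := Complex.I * y with hzdef
  have hz0 : z ≠ 0 := by intro h; rw [h] at hz; simp at hz
  have hzb : z - β ≠ 0 := sub_ofReal_ne hz β
  have hG := cauchyG_ne_zero μ hz
  have hGi := integrable_inv μ hz
  have e1 : ∫ x : ℝ, ((1 : ℝ) : ℂ) * (z * (z - (x : ℂ))⁻¹) ∂μ = z * cauchyG μ z := by
    simp only [Complex.ofReal_one, one_mul]
    rw [integral_const_mul]; rfl
  have e2 : ∫ x : ℝ, (((x - β) ^ 2 : ℝ) : ℂ) * (z * (z - (x : ℂ))⁻¹) ∂μ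
      = z * ((z - β) * ((z - β) * cauchyG μ z - 1)) := by
    have hp : ∀ x : ℝ, (((x - β) ^ 2 : ℝ) : ℂ) * (z * (z - (x : ℂ))⁻¹)
        = z * ((z - β) ^ 2 * (z - (x : ℂ))⁻¹ - (z - 2 * β + ((x : ℝ) : ℂ))) := by
      intro x
      have := sub_ofReal_ne hz x
      push_cast
      field_simp
      ring
    simp_rw [hp]
    have hx : ∫ x : ℝ, (x : ℂ) ∂μ = β := by
      rw [← hmean]; exact integral_ofReal
    have hxi : Integrable (fun x : ℝ => (x : ℂ)) μ := hi1.ofReal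
    have hxi2 : Integrable (fun x : ℝ => z - 2 * β + (x : ℂ)) μ := (integrable_const _).add hxi
    rw [integral_const_mul, integral_sub (hGi.const_mul _) hxi2, integral_const_mul,
      integral_add (integrable_const _) hxi, hx]
    rw [show ∫ x : ℝ, (z - (x : ℂ))⁻¹ ∂μ = cauchyG μ z from rfl]
    simp only [integral_const, probReal_univ, one_smul]
    ring
  simp only [Pi.div_apply]
  rw [e1, e2, ← hzdef]
  field_simp

/-- For a non-degenerate probability measure `μ` with mean `β` and variance `α > 0`,
there is a probability measure `ω` with `G_μ(z) = 1/(z − β − α·G_ω(z))` on the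
upper half-plane. -/
theorem exists_measure_F_transform_converse (μ : Measure ℝ)
    (hμ : IsProbabilityMeasure μ) (hnd : ∀ a : ℝ, μ ≠ Measure.dirac a)
    (α β : ℝ) (hint : Integrable (fun x : ℝ => x ^ 2) μ)
    (hmean : (∫ x, x ∂μ) = β) (hvar : (∫ x, (x - β) ^ 2 ∂μ) = α) (hα : 0 < α) :
    ∃ ω : Measure ℝ, IsProbabilityMeasure ω ∧
      ∀ z : ℂ, 0 < z.im →
        cauchyG μ z = 1 / (z - (β : ℂ) - (α : ℂ) * cauchyG ω z) := by
  have hα' : (α : ℂ) ≠ 0 := by exact_mod_cast hα.ne'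
  have hi1 : Integrable (fun x : ℝ => x) μ := by
    refine Integrable.mono' (hint.add (integrable_const 1)) (by fun_prop)
      (Eventually.of_forall fun x => ?_)
    simp only [Pi.add_apply, Real.norm_eq_abs]
    nlinarith [sq_nonneg (|x| - 1), sq_abs x, abs_nonneg x]
  have hi2 : Integrable (fun x : ℝ => (x - β) ^ 2) μ := by
    have : (fun x : ℝ => (x - β) ^ 2) = fun x => x ^ 2 - 2 * β * x + β ^ 2 := by
      ext x; ring
    rw [this]
    exact (hint.sub (hi1.const_mul _)).add (integrable_const _)
  -- simple approximations
  let f : ℕ → SimpleFunc ℝ ℝ := fun n =>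
    SimpleFunc.approxOn id measurable_id Set.univ 0 trivial n
  have hflim : ∀ x, Tendsto (fun n => f n x) atTop (𝓝 x) := fun x =>
    SimpleFunc.tendsto_approxOn (f := id) measurable_id (s := Set.univ) (Set.mem_univ (0 : ℝ)) (by simp)
  have hfb : ∀ n x, |f n x| ≤ 2 * |x| := by
    intro n x
    have := SimpleFunc.norm_approxOn_zero_le (f := id) measurable_id (s := Set.univ) trivial x n
    simp only [id, Real.norm_eq_abs] at this
    linarith
  have hfm : ∀ n, Measurable (f n) := fun n => (f n).measurable
  let b : ℕ → ℝ := fun n => ∫ x, f n x ∂μ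
  let q : ℕ → ℝ := fun n => ∫ x, (f n x) ^ 2 ∂μ
  let a : ℕ → ℝ := fun n => ∫ x, (f n x - b n) ^ 2 ∂μ
  have hq2 : ∀ n x, ‖(f n x) ^ 2‖ ≤ 4 * x ^ 2 := by
    intro n x
    rw [Real.norm_eq_abs, abs_pow]
    have := hfb n x
    nlinarith [abs_nonneg (f n x), abs_nonneg x, sq_abs x]
  have hif : ∀ n, Integrable (f n) μ := fun n =>
    Integrable.mono' (hi1.abs.const_mul 2) (hfm n).aestronglyMeasurable
      (Eventually.of_forall (hfb n))
  have hif2 : ∀ n, Integrable (fun x => (f n x) ^ 2) μ := fun n =>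
    Integrable.mono' (hint.const_mul 4) ((hfm n).pow_const 2).aestronglyMeasurable
      (Eventually.of_forall (hq2 n))
  have hb : Tendsto b atTop (𝓝 β) := by
    rw [← hmean]
    exact tendsto_integral_of_dominated_convergence (fun x => 2 * |x|)
      (fun n => (hfm n).aestronglyMeasurable) (hi1.abs.const_mul 2)
      (fun n => Eventually.of_forall (hfb n)) (Eventually.of_forall hflim)
  have hq : Tendsto q atTop (𝓝 (∫ x, x ^ 2 ∂μ)) :=
    tendsto_integral_of_dominated_convergence (fun x => 4 * x ^ 2)
      (fun n => ((hfm n).pow_const 2).aestronglyMeasurable) (hint.const_mul 4)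
      (fun n => Eventually.of_forall (hq2 n)) (Eventually.of_forall fun x => (hflim x).pow 2)
  have hvg : ∀ (g : ℝ → ℝ) (c : ℝ), Integrable g μ → Integrable (fun x => g x ^ 2) μ →
      ∫ x, g x ∂μ = c → ∫ x, (g x - c) ^ 2 ∂μ = ∫ x, g x ^ 2 ∂μ - c ^ 2 := by
    intro g c h1 h2 h3
    have hl : Integrable (fun x => 2 * c * g x - c ^ 2) μ :=
      (h1.const_mul _).sub (integrable_const _)
    have : ∀ x, (g x - c) ^ 2 = g x ^ 2 - (2 * c * g x - c ^ 2) := fun x => by ring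
    simp_rw [this]
    rw [integral_sub h2 hl,
      integral_sub (h1.const_mul _) (integrable_const _), integral_const_mul, h3]
    simp; ring
  have ha : Tendsto a atTop (𝓝 α) := by
    have h1 : α = ∫ x, x ^ 2 ∂μ - β ^ 2 := by
      rw [← hvar]; exact hvg (fun x => x) β hi1 hint hmean
    rw [h1]
    refine (hq.sub (hb.pow 2)).congr fun n => ?_
    exact (hvg (f n) (b n) (hif n) (hif2 n) rfl).symm
  have hG : ∀ z : ℂ, 0 < z.im →
      Tendsto (fun n => ∫ x, (z - (f n x : ℂ))⁻¹ ∂μ) atTop (𝓝 (cauchyG μ z)) := by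
    intro z hz
    refine tendsto_integral_of_dominated_convergence (fun _ => z.im⁻¹)
      (fun n => ((cont_inv hz).measurable.comp (hfm n)).aestronglyMeasurable)
      (integrable_const _) (fun n => Eventually.of_forall fun x => norm_inv_le hz _)
      (Eventually.of_forall fun x => ?_)
    exact ((cont_inv hz).tendsto x).comp (hflim x)
  obtain ⟨N, hN⟩ := eventually_atTop.1 (ha.eventually_const_lt hα)
  choose ω hω using fun n : ℕ => simple_case μ (f (n + N)) (a (n + N)) (b (n + N)) rfl rfl
    (hN (n + N) (Nat.le_add_left _ _))
  obtain ⟨ν, hν, H⟩ := limit_lemma ω (fun z => (z - β - (cauchyG μ z)⁻¹) / α) (by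
    intro z hz
    have hs := tendsto_add_atTop_nat N
    have hb' : Tendsto (fun n => ((b (n + N) : ℝ) : ℂ)) atTop (𝓝 (β : ℂ)) :=
      (Complex.continuous_ofReal.tendsto _).comp (hb.comp hs)
    have ha' : Tendsto (fun n => ((a (n + N) : ℝ) : ℂ)) atTop (𝓝 (α : ℂ)) :=
      (Complex.continuous_ofReal.tendsto _).comp (ha.comp hs)
    have hG' := ((hG z hz).comp hs).inv₀ (cauchyG_ne_zero μ hz)
    refine (((hb'.const_sub z).sub hG').div ha' hα').congr fun n => ?_
    have h0 : ((a (n + N) : ℝ) : ℂ) ≠ 0 := by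
      exact_mod_cast (hN (n + N) (Nat.le_add_left _ _)).ne'
    have h1 := hω n z hz
    have h2 := eq_inv_of_mul_eq_one_right h1
    simp only [Pi.div_apply, Function.comp_apply]
    rw [← h2]
    field_simp
    ring) (asymp μ α β hi1 hi2 hmean hvar hα)
  refine ⟨ν, hν, fun z hz => ?_⟩
  rw [H z hz, mul_div_cancel₀ _ hα']
  simp
end
end

section
/- Let d ≥ 1 and let β₁,…,β_d > 0 and p₁,…,p_d > 0 be real numbers such that max{p_j, 1/β_j} ≥ 1 for each j = 1,…,d. Then the function V(m) = (1 + m)·∏_{j=1}^{d} (1 + β_j·m)^{p_j} (defined for m in a neighborhood of 0 where all factors are positive, with real powers) belongs to the class 𝒱∞. -/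
open MeasureTheory Filter

noncomputable section

/-- The Cauchy–Stieltjes kernel density `f(x,m) = V(m)/(V(m)+m(m-x))`. -/
def cskKernel (V : ℝ → ℝ) (m x : ℝ) : ℝ := V m / (V m + m * (m - x))

/-- `ν` is a non-degenerate, compactly supported probability measure on `ℝ` with mean `0`. -/
def IsCSKGenerator (ν : Measure ℝ) : Prop :=
  IsProbabilityMeasure ν ∧
  (∃ R : ℝ, ν (Set.Icc (-R) R)ᶜ = 0) ∧
  (∀ a : ℝ, ν ≠ Measure.dirac a) ∧
  (∫ x, x ∂ν) = 0

/-- `V` is the variance function of the CSK family generated by `ν`: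
`V` is real-analytic near `0`, `V 0 > 0`, and for all `m` near `0` the kernel
`f(x,m)` is a.e. nonnegative, integrates to `1`, and has mean `m`. -/
def IsCSKVarianceFun (ν : Measure ℝ) (V : ℝ → ℝ) : Prop :=
  AnalyticAt ℝ V 0 ∧ 0 < V 0 ∧
  ∃ ε > 0, ∀ m : ℝ, |m| < ε →
    (∀ᵐ x ∂ν, 0 ≤ cskKernel V m x) ∧
    (∫ x, cskKernel V m x ∂ν) = 1 ∧
    (∫ x, x * cskKernel V m x ∂ν) = m

/-- The class `𝒱` of variance functions of CSK families generated by
non-degenerate compactly supported probability measures with mean `0` and variance `1`. -/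
def memV (V : ℝ → ℝ) : Prop :=
  ∃ ν : Measure ℝ, IsCSKGenerator ν ∧ (∫ x, x ^ 2 ∂ν) = 1 ∧ IsCSKVarianceFun ν V

/-- The class `𝒱∞`: those `V` such that `m ↦ V (c * m)` is in `𝒱` for every real `c`. -/
def memVinf (V : ℝ → ℝ) : Prop := ∀ c : ℝ, memV (fun m => V (c * m))

section CskProof
open Complex Topology

lemma csk_kernel_identity (K z : ℂ) (u : ℝ) (hz : ‖z‖ = 1) (hu : |u| < 1) :
    (z * K).im * z.im / (1 - 2 * u * z.re + u ^ 2)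
      = (1 / 2) * ((z / (z - u)) * K).re - (1 / 2) * (z * K * (z / (1 - u * z))).re := by
  have hz2 : z.re ^ 2 + z.im ^ 2 = 1 := by
    have := Complex.sq_norm z
    rw [hz, Complex.normSq_apply] at this
    nlinarith
  have hD : (0 : ℝ) < 1 - 2 * u * z.re + u ^ 2 := by
    have h1 : (u - z.re) ^ 2 + z.im ^ 2 = 1 - 2 * u * z.re + u ^ 2 := by nlinarith
    rw [← h1]
    have h2 := abs_lt.1 hu
    by_contra hcon
    push Not at hcon
    have h3 : z.im ^ 2 = 0 := by nlinarith [sq_nonneg (u - z.re), sq_nonneg z.im]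
    have h4 : (u - z.re) ^ 2 = 0 := by nlinarith [sq_nonneg (u - z.re), sq_nonneg z.im]
    have h5 : u = z.re := by nlinarith [pow_eq_zero_iff (two_ne_zero) |>.1 h4]
    rw [h3, ← h5] at hz2
    nlinarith
  have e1 : z / (z - u) = (1 - u * z) / ((1 - 2 * u * z.re + u ^ 2 : ℝ) : ℂ) := by
    have hne : z - u ≠ 0 := by
      intro h
      have : z = u := by linear_combination h
      rw [this] at hz
      simp at hz
      linarith
    rw [div_eq_div_iff hne (by exact_mod_cast hD.ne')]
    have e : (starRingEnd ℂ) z * z = 1 := by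
      rw [mul_comm, Complex.mul_conj, Complex.normSq_apply]
      norm_cast; nlinarith
    have e2 : (2 * z.re : ℂ) = z + (starRingEnd ℂ) z := by
      rw [Complex.add_conj]; push_cast; ring
    push_cast
    linear_combination (-z * u) * e2 - u * e
  have e3 : z / (1 - u * z) = (z - u) / ((1 - 2 * u * z.re + u ^ 2 : ℝ) : ℂ) := by
    have hne : 1 - u * z ≠ 0 := by
      intro h
      have : (u : ℂ) * z = 1 := by linear_combination -h
      have h2 := congrArg norm this
      rw [norm_mul, hz] at h2
      simp at h2
      linarith
    rw [div_eq_div_iff hne (by exact_mod_cast hD.ne')]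
    have e : (starRingEnd ℂ) z * z = 1 := by
      rw [mul_comm, Complex.mul_conj, Complex.normSq_apply]
      norm_cast; nlinarith
    have e2 : (2 * z.re : ℂ) = z + (starRingEnd ℂ) z := by
      rw [Complex.add_conj]; push_cast; ring
    push_cast
    linear_combination (-z * u) * e2 - u * e
  rw [e1, e3]
  have e4 : (1 - u * z) / ((1 - 2 * u * z.re + u ^ 2 : ℝ) : ℂ) * K
      = ((1 - u * z) * K) / ((1 - 2 * u * z.re + u ^ 2 : ℝ) : ℂ) := by ring
  have e5 : z * K * ((z - u) / ((1 - 2 * u * z.re + u ^ 2 : ℝ) : ℂ))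
      = (z * K * (z - u)) / ((1 - 2 * u * z.re + u ^ 2 : ℝ) : ℂ) := by ring
  rw [e4, e5, Complex.div_ofReal_re, Complex.div_ofReal_re]
  have e6 : 2 * ((z * K).im * z.im) = ((1 - u * z) * K).re - (z * K * (z - u)).re := by
    simp only [Complex.mul_re, Complex.mul_im, Complex.sub_re, Complex.sub_im, Complex.one_re,
      Complex.one_im, Complex.ofReal_re, Complex.ofReal_im]
    linear_combination K.re * hz2
  have e7 : (z * K).im * z.im
      = (1 / 2) * ((1 - u * z) * K).re - (1 / 2) * (z * K * (z - u)).re := by linarith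
  rw [e7]; ring

lemma csk_average (K : ℂ → ℂ) (ρ : ℝ) (hρ : 1 < ρ) (hK : DifferentiableOn ℂ K (Metric.ball 0 ρ))
    (u : ℝ) (hu : |u| < 1) :
    Real.circleAverage (fun z => (z * K z).im * z.im / (1 - 2 * u * z.re + u ^ 2)) 0 1
      = (K u).re / 2 := by
  have hKc : ContinuousOn K (Metric.sphere 0 1) := hK.continuousOn.mono (by
    intro z hz; simp at hz ⊢; linarith)
  have hne1 : ∀ z ∈ Metric.closedBall (0 : ℂ) 1, 1 - u * z ≠ 0 := by
    intro z hz h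
    have : (u : ℂ) * z = 1 := by linear_combination -h
    have h2 := congrArg norm this
    rw [norm_mul] at h2
    simp at h2 hz
    nlinarith [abs_nonneg u, norm_nonneg z]
  have hne2 : ∀ z ∈ Metric.sphere (0 : ℂ) 1, z - u ≠ 0 := by
    intro z hz h
    have : z = u := by linear_combination h
    rw [this] at hz
    simp at hz
    linarith
  have hsub : Metric.sphere (0 : ℂ) 1 ⊆ Metric.closedBall 0 1 := Metric.sphere_subset_closedBall
  have hbsub : Metric.closedBall (0 : ℂ) 1 ⊆ Metric.ball 0 ρ := Metric.closedBall_subset_ball hρ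
  have hd1 : DiffContOnCl ℂ K (Metric.ball 0 |1|) := by
    apply DifferentiableOn.diffContOnCl
    rw [abs_one, closure_ball _ one_ne_zero]
    exact hK.mono hbsub
  have hd2 : DiffContOnCl ℂ (fun z => z * K z * (z / (1 - u * z))) (Metric.ball 0 |1|) := by
    apply DifferentiableOn.diffContOnCl
    rw [abs_one, closure_ball _ one_ne_zero]
    refine (differentiableOn_id.mul (hK.mono hbsub)).mul (differentiableOn_id.div ?_ hne1)
    fun_prop
  have a1 : Real.circleAverage (fun z => (z / (z - u)) * K z) 0 1 = K u := by
    have := hd1.circleAverage_smul_div (w := (u : ℂ)) (by simpa using hu)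
    simpa using this
  have a2 : Real.circleAverage (fun z => z * K z * (z / (1 - u * z))) 0 1 = 0 := by
    have := hd2.circleAverage
    simpa using this
  have i1 : CircleIntegrable (fun z => (z / (z - u)) * K z) 0 1 := by
    apply ContinuousOn.circleIntegrable zero_le_one
    exact (continuousOn_id.div (by fun_prop) hne2).mul hKc
  have i2 : CircleIntegrable (fun z => z * K z * (z / (1 - u * z))) 0 1 := by
    apply ContinuousOn.circleIntegrable zero_le_one
    exact (continuousOn_id.mul hKc).mul
      (continuousOn_id.div (by fun_prop) (fun z hz => hne1 z (hsub hz)))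
  have key : Real.circleAverage (fun z => (z * K z).im * z.im / (1 - 2 * u * z.re + u ^ 2)) 0 1
      = Real.circleAverage (fun z => Complex.reCLM ((1 / 2 : ℝ) • (((z / (z - u)) * K z)
        - (z * K z * (z / (1 - u * z)))))) 0 1 := by
    apply Real.circleAverage_congr_sphere
    intro z hz
    simp only [abs_one, mem_sphere_iff_norm, sub_zero] at hz
    simp only [csk_kernel_identity (K z) z u hz hu, Complex.reCLM_apply, Complex.real_smul]
    rw [Complex.re_ofReal_mul, Complex.sub_re]; ring
  rw [key]
  have i3 : CircleIntegrable (fun z => ((1 / 2 : ℝ) • (((z / (z - u)) * K z)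
        - (z * K z * (z / (1 - u * z)))))) 0 1 := by
    apply ContinuousOn.circleIntegrable zero_le_one
    exact (((continuousOn_id.div (by fun_prop) hne2).mul hKc).sub ((continuousOn_id.mul hKc).mul
      (continuousOn_id.div (by fun_prop) (fun z hz => hne1 z (hsub hz))))).const_smul (1 / 2 : ℝ)
  have h3 := ContinuousLinearMap.circleAverage_comp_comm Complex.reCLM
    (f := (fun z => ((1 / 2 : ℝ) • (((z / (z - u)) * K z)
        - (z * K z * (z / (1 - u * z))))))) (c := 0) (R := 1) i3
  have h4 : Real.circleAverage (fun z => ((1 / 2 : ℝ) • (((z / (z - u)) * K z)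
        - (z * K z * (z / (1 - u * z)))))) 0 1 = (1 / 2 : ℝ) • K u := by
    rw [Real.circleAverage_fun_smul, Real.circleAverage_fun_sub i1 i2, a1, a2, sub_zero]
  rw [h4] at h3
  rw [show (fun z => Complex.reCLM ((1 / 2 : ℝ) • (((z / (z - u)) * K z)
        - (z * K z * (z / (1 - u * z)))))) = ⇑Complex.reCLM ∘ (fun z => ((1 / 2 : ℝ) • (((z / (z - u)) * K z)
        - (z * K z * (z / (1 - u * z)))))) from rfl, h3]
  simp only [Complex.reCLM_apply, Complex.real_smul]
  rw [Complex.re_ofReal_mul]; ring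

abbrev CskI : Type := Set.Icc (-1 : ℝ) 1

/-- Herglotz-type representation with regular boundary values. -/
lemma csk_exists_measure (K : ℂ → ℂ) (ρ : ℝ) (hρ : 1 < ρ)
    (hK : DifferentiableOn ℂ K (Metric.ball 0 ρ)) (hK0 : K 0 = 1)
    (hpos : ∀ z : ℂ, ‖z‖ = 1 → 0 ≤ (z * K z).im * z.im) :
    ∃ P : ProbabilityMeasure CskI, ∀ u : ℝ, |u| < 1 →
      ∫ x, 1 / (1 - 2 * u * (x : ℝ) + u ^ 2) ∂(P : Measure CskI) = (K u).re := by
  have hKc : ContinuousOn K (Metric.sphere 0 1) := hK.continuousOn.mono (by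
    intro z hz; simp at hz ⊢; linarith)
  have hcm : Continuous (fun θ : ℝ => K (circleMap 0 1 θ)) := by
    apply hKc.comp_continuous (by fun_prop)
    intro θ; simp
  let ζ : ℝ → ℂ := fun θ => circleMap 0 1 θ
  have hζ : Continuous ζ := by fun_prop
  let dens : ℝ → ℝ := fun θ => Real.pi⁻¹ * ((ζ θ * K (ζ θ)).im * (ζ θ).im)
  have hdc : Continuous dens := by
    have h1 : Continuous fun θ => ζ θ * K (ζ θ) := hζ.mul hcm
    exact continuous_const.mul ((Complex.continuous_im.comp h1).mul (Complex.continuous_im.comp hζ))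
  have hd0 : ∀ θ, 0 ≤ dens θ := fun θ =>
    mul_nonneg (by positivity) (hpos _ (by simp [ζ]))
  let m : Measure ℝ := (volume.restrict (Set.Ioc 0 (2 * Real.pi))).withDensity
    (fun θ => ENNReal.ofReal (dens θ))
  let c : ℝ → CskI := fun θ => ⟨Real.cos θ, Real.neg_one_le_cos θ, Real.cos_le_one θ⟩
  have hc : Continuous c := Real.continuous_cos.subtype_mk _
  have key : ∀ u : ℝ, |u| < 1 → ∫ θ, 1 / (1 - 2 * u * (c θ : ℝ) + u ^ 2) ∂m = (K u).re := by
    intro u hu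
    have h1 := csk_average K ρ hρ hK u hu
    rw [Real.circleAverage_def, intervalIntegral.integral_of_le (by positivity)] at h1
    have h2 : ∫ θ, 1 / (1 - 2 * u * (c θ : ℝ) + u ^ 2) ∂m
        = ∫ θ in Set.Ioc 0 (2 * Real.pi), dens θ • (1 / (1 - 2 * u * (c θ : ℝ) + u ^ 2)) := by
      have := integral_withDensity_eq_integral_toReal_smul (μ := volume.restrict (Set.Ioc 0 (2 * Real.pi)))
        (f := fun θ => ENNReal.ofReal (dens θ)) (by fun_prop) (by simp)
        (fun θ => 1 / (1 - 2 * u * (c θ : ℝ) + u ^ 2))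
      simp only [m]
      rw [this]
      congr 1
      ext θ
      rw [ENNReal.toReal_ofReal (hd0 θ)]
    rw [h2]
    have h3 : ∀ θ, dens θ • (1 / (1 - 2 * u * (c θ : ℝ) + u ^ 2))
        = Real.pi⁻¹ * ((circleMap 0 1 θ * K (circleMap 0 1 θ)).im * (circleMap 0 1 θ).im /
          (1 - 2 * u * (circleMap 0 1 θ).re + u ^ 2)) := by
      intro θ
      have : (circleMap 0 1 θ).re = Real.cos θ := by
        simp [circleMap, Complex.exp_ofReal_mul_I_re]
      rw [this]
      simp only [dens, c, ζ, smul_eq_mul]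
      ring
    simp_rw [h3]
    rw [integral_const_mul]
    simp only [smul_eq_mul] at h1
    have hpi := Real.pi_pos
    field_simp at h1 ⊢
    linarith
  have hmass : m Set.univ = 1 := by
    have h0 := key 0 (by simp)
    simp [hK0] at h0
    rw [measureReal_def] at h0
    have hf : m Set.univ ≠ ⊤ := by
      intro h; rw [h] at h0; simp at h0
    rw [← ENNReal.ofReal_toReal hf, h0]; simp
  have hm : IsProbabilityMeasure m := ⟨hmass⟩
  refine ⟨⟨m.map c, Measure.isProbabilityMeasure_map hc.measurable.aemeasurable⟩, ?_⟩
  intro u hu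
  rw [← key u hu]
  simp only [ProbabilityMeasure.coe_mk]
  rw [integral_map hc.measurable.aemeasurable]
  apply Measurable.aestronglyMeasurable
  fun_prop

/-- Compactness: pointwise limits of Stieltjes transforms. -/
lemma csk_limit {γ : Type*} (A : Set ℝ) (hA : ∀ a ∈ A, |a| < 1) (F : Filter γ) [F.NeBot]
    (P : γ → ProbabilityMeasure CskI) (T : ℝ → ℝ)
    (h : ∀ a ∈ A, Tendsto (fun i => ∫ x, 1 / (1 - a * (x : ℝ)) ∂(P i : Measure CskI)) F
      (𝓝 (T a))) :
    ∃ Q : ProbabilityMeasure CskI, ∀ a ∈ A, ∫ x, 1 / (1 - a * (x : ℝ)) ∂(Q : Measure CskI) = T a := by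
  obtain ⟨Q, -, hQ⟩ := isCompact_univ (X := ProbabilityMeasure CskI)
    (f := F.map P) (by simp)
  obtain ⟨U, hUF, hUQ⟩ := mapClusterPt_iff_ultrafilter.1 hQ
  refine ⟨Q, fun a ha => ?_⟩
  have hcont : Continuous (fun x : CskI => 1 / (1 - a * (x : ℝ))) := by
    refine continuous_const.div (by fun_prop) ?_
    intro x hx
    have h1 := hA a ha
    have h2 : |(x : ℝ)| ≤ 1 := abs_le.2 x.2
    have h3 : a * x = 1 := by linarith
    have h4 : |a| * |(x : ℝ)| = 1 := by rw [← abs_mul, h3, abs_one]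
    nlinarith [abs_nonneg a, abs_nonneg (x : ℝ)]
  have := ProbabilityMeasure.tendsto_iff_forall_integral_tendsto.1 hUQ
    (BoundedContinuousFunction.mkOfCompact ⟨_, hcont⟩)
  exact tendsto_nhds_unique this ((h a ha).mono_left hUF)

/-- The slit plane `ℂ ∖ ((-∞,-δ] ∪ [δ,∞))`. -/
def CskOmega (δ : ℝ) : Set ℂ := {w | w.im = 0 → |w.re| < δ}

lemma cskOmega_isOpen (δ : ℝ) : IsOpen (CskOmega δ) := by
  have h : CskOmega δ = {w : ℂ | w.im = 0 ∧ δ ≤ |w.re|}ᶜ := by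
    ext w; simp [CskOmega]
  rw [h]
  refine isOpen_compl_iff.2 ?_
  exact (isClosed_eq Complex.continuous_im continuous_const).inter
    (isClosed_le continuous_const (Complex.continuous_re.abs))

lemma csk_joukowski_ne (v : ℂ) (hv : ‖v‖ < 1) : 1 + v ^ 2 ≠ 0 := by
  intro h
  have h1 : v ^ 2 = -1 := by linear_combination h
  have h2 := congrArg norm h1
  rw [norm_pow] at h2
  simp at h2
  have := norm_nonneg v
  rcases h2 with h2 | h2 <;> linarith

lemma csk_joukowski_im (δ : ℝ) (v : ℂ) :
    (δ * v / (1 + v ^ 2)).im = δ * (1 - ‖v‖ ^ 2) / Complex.normSq (1 + v ^ 2) * v.im := by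
  rw [Complex.div_im, Complex.sq_norm, Complex.normSq_apply v]
  have e : (1 + v ^ 2).re = 1 + v.re ^ 2 - v.im ^ 2 := by simp [pow_two]; ring
  have e' : (1 + v ^ 2).im = 2 * v.re * v.im := by simp [pow_two]; ring
  have e1 : ((δ : ℂ) * v).re = δ * v.re := by simp
  have e2 : ((δ : ℂ) * v).im = δ * v.im := by simp
  rw [e, e', e1, e2]; ring

lemma csk_joukowski_mem (δ : ℝ) (hδ : 0 < δ) (v : ℂ) (hv : ‖v‖ < 1) :
    (δ * v / (1 + v ^ 2)) ∈ CskOmega δ := by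
  intro h
  rw [csk_joukowski_im] at h
  have h1 : 0 < 1 - ‖v‖ ^ 2 := by nlinarith [norm_nonneg v]
  have h2 : 0 < Complex.normSq (1 + v ^ 2) := Complex.normSq_pos.2 (csk_joukowski_ne v hv)
  have h3 : v.im = 0 := by
    rcases mul_eq_zero.1 h with h | h
    · have : 0 < δ * (1 - ‖v‖ ^ 2) / Complex.normSq (1 + v ^ 2) := by positivity
      linarith
    · exact h
  have h4 : v = (v.re : ℂ) := by apply Complex.ext <;> simp [h3]
  rw [h4]
  have h5 : ((δ : ℂ) * (v.re : ℂ) / (1 + (v.re : ℂ) ^ 2)) = ((δ * v.re / (1 + v.re ^ 2) : ℝ) : ℂ) := by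
    push_cast; rfl
  rw [h5, Complex.ofReal_re, abs_div, abs_mul, abs_of_pos hδ, abs_of_pos (by positivity : 0 < 1 + v.re ^ 2),
    div_lt_iff₀ (by positivity)]
  rcases abs_cases v.re with h | h <;> nlinarith [sq_nonneg (|v.re| - 1), sq_abs v.re]

/-- Nevanlinna-type representation on the slit plane. -/
lemma csk_nevanlinna (k : ℂ → ℂ) (δ : ℝ) (hδ : 0 < δ) (hk : DifferentiableOn ℂ k (CskOmega δ))
    (hk0 : k 0 = 1) (hpos : ∀ w : ℂ, 0 ≤ (w * k w).im * w.im) :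
    ∃ Q : ProbabilityMeasure CskI, ∀ a : ℝ, |a| < 1 →
      ∫ x, 1 / (1 - a * (x : ℝ)) ∂(Q : Measure CskI) = (k ((δ * a / 2 : ℝ) : ℂ)).re := by
  have hP : ∀ n : ℕ, ∃ P : ProbabilityMeasure CskI, ∀ u : ℝ, |u| < 1 →
      ∫ x, 1 / (1 - 2 * u * (x : ℝ) + u ^ 2) ∂(P : Measure CskI)
        = (k (δ * ((n + 1 : ℝ) / (n + 2) * u : ℝ) / (1 + (((n + 1 : ℝ) / (n + 2) * u : ℝ) : ℂ) ^ 2)) /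
          (1 + (((n + 1 : ℝ) / (n + 2) * u : ℝ) : ℂ) ^ 2)).re := by
    intro n
    set r : ℝ := (n + 1 : ℝ) / (n + 2) with hr
    have hr0 : 0 < r := by positivity
    have hr1 : r < 1 := by rw [hr, div_lt_one (by positivity)]; linarith
    have hin : ∀ z ∈ Metric.ball (0 : ℂ) (1 / r), ‖(r : ℂ) * z‖ < 1 := by
      intro z hz
      simp only [Metric.mem_ball, dist_zero_right] at hz
      rw [norm_mul, Complex.norm_real, Real.norm_eq_abs, abs_of_pos hr0]
      rw [lt_div_iff₀ hr0] at hz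
      linarith
    have G1 : DifferentiableOn ℂ (fun z : ℂ => k (δ * (r * z) / (1 + (r * z) ^ 2)) / (1 + (r * z) ^ 2)) (Metric.ball 0 (1 / r)) := by
      have hne : ∀ z ∈ Metric.ball (0 : ℂ) (1 / r), 1 + ((r : ℂ) * z) ^ 2 ≠ 0 :=
        fun z hz => csk_joukowski_ne _ (hin z hz)
      refine DifferentiableOn.div (hk.comp (DifferentiableOn.div (by fun_prop) (by fun_prop) hne) ?_)
        (by fun_prop) hne
      intro z hz
      exact csk_joukowski_mem δ hδ _ (hin z hz)
    have G2 : ∀ z : ℂ, ‖z‖ = 1 → 0 ≤ (z * (k (δ * (r * z) / (1 + (r * z) ^ 2)) / (1 + (r * z) ^ 2))).im * z.im := by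
      intro z hz
      have hv : ‖(r : ℂ) * z‖ < 1 := by
        rw [norm_mul, Complex.norm_real, Real.norm_eq_abs, abs_of_pos hr0, hz]; linarith
      set v : ℂ := (r : ℂ) * z with hvdef
      have hne := csk_joukowski_ne _ hv
      have h1 : 0 < 1 - ‖v‖ ^ 2 := by nlinarith [norm_nonneg v]
      have h2 : 0 < Complex.normSq (1 + v ^ 2) := Complex.normSq_pos.2 hne
      have him := csk_joukowski_im δ v
      have hvim : v.im = r * z.im := by simp [hvdef]
      have hp := hpos (δ * v / (1 + v ^ 2))
      have hz' : z * (k (δ * v / (1 + v ^ 2)) / (1 + v ^ 2))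
          = ((δ * v / (1 + v ^ 2)) * k (δ * v / (1 + v ^ 2))) / ((δ * r : ℝ) : ℂ) := by
        have hδc : (δ : ℂ) ≠ 0 := by exact_mod_cast hδ.ne'
        have hrc : (r : ℂ) ≠ 0 := by exact_mod_cast hr0.ne'
        push_cast
        field_simp
        rw [hvdef]; ring
      rw [hz', Complex.div_ofReal_im]
      rw [him, hvim] at hp
      have hC : 0 < δ * (1 - ‖v‖ ^ 2) / Complex.normSq (1 + v ^ 2) * r := by positivity
      have hp2 : 0 ≤ (δ * (1 - ‖v‖ ^ 2) / Complex.normSq (1 + v ^ 2) * r) *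
          ((δ * v / (1 + v ^ 2) * k (δ * v / (1 + v ^ 2))).im * z.im) := by
        calc _ ≤ _ := hp
          _ = _ := by ring
      have hp3 := nonneg_of_mul_nonneg_right hp2 hC
      rw [div_mul_eq_mul_div]
      positivity
    obtain ⟨P, hP⟩ := csk_exists_measure
      (fun z => k (δ * (r * z) / (1 + (r * z) ^ 2)) / (1 + (r * z) ^ 2)) (1 / r)
      (by rw [lt_div_iff₀ hr0]; linarith) G1 (by simp [hk0]) G2
    · refine ⟨P, fun u hu => ?_⟩
      rw [hP u hu]
      push_cast
      rfl
  choose P hP using hP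
  apply csk_limit {a | |a| < 1} (fun a ha => ha) atTop P (fun a => (k ((δ * a / 2 : ℝ) : ℂ)).re)
  intro a ha
  simp only [Set.mem_ofPred_eq] at ha
  have ha2 : 0 < 1 - a ^ 2 := by nlinarith [abs_lt.1 ha]
  set s := Real.sqrt (1 - a ^ 2) with hs
  have hs0 : 0 < s := Real.sqrt_pos.2 ha2
  have hs2 : s ^ 2 = 1 - a ^ 2 := Real.sq_sqrt ha2.le
  set u := a / (1 + s) with hu
  have hu1 : |u| < 1 := by
    rw [hu, abs_div, abs_of_pos (by positivity : 0 < 1 + s), div_lt_one (by positivity)]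
    linarith
  have hau : u / (1 + u ^ 2) = a / 2 := by
    rw [hu]
    have : 1 + (a / (1 + s)) ^ 2 = 2 / (1 + s) := by
      field_simp; nlinarith
    rw [this]; field_simp
  have h1 : ∀ n, ∫ x, 1 / (1 - a * (x : ℝ)) ∂(P n : Measure CskI)
      = (1 + u ^ 2) * ∫ x, 1 / (1 - 2 * u * (x : ℝ) + u ^ 2) ∂(P n : Measure CskI) := by
    intro n
    rw [← integral_const_mul]
    congr 1
    ext x
    have hx : |(x : ℝ)| ≤ 1 := abs_le.2 x.2
    have ha' : a = 2 * (u / (1 + u ^ 2)) := by rw [hau]; ring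
    have hd : 1 - a * (x : ℝ) = (1 - 2 * u * x + u ^ 2) / (1 + u ^ 2) := by
      rw [ha']; field_simp; ring
    rw [hd, one_div_div]; ring
  simp_rw [h1, hP _ u hu1]
  have hr : Tendsto (fun n : ℕ => (n + 1 : ℝ) / (n + 2)) atTop (𝓝 1) := by
    have h := tendsto_one_div_add_atTop_nhds_zero_nat (𝕜 := ℝ)
    have h2 : Tendsto (fun n : ℕ => 1 - 1 / ((n : ℝ) + 2)) atTop (𝓝 (1 - 0)) := by
      refine tendsto_const_nhds.sub ?_
      have := h.comp (tendsto_add_atTop_nat 1)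
      refine this.congr (fun n => ?_)
      simp [add_assoc]; norm_num
    rw [sub_zero] at h2
    refine h2.congr (fun n => ?_)
    field_simp; ring
  have hru : Tendsto (fun n : ℕ => (((n + 1 : ℝ) / (n + 2) * u : ℝ) : ℂ)) atTop (𝓝 (u : ℂ)) := by
    have := (hr.mul_const u)
    rw [one_mul] at this
    exact (Complex.continuous_ofReal.tendsto u).comp this
  have hv : ‖(u : ℂ)‖ < 1 := by simpa using hu1
  have hne := csk_joukowski_ne _ hv
  have hkc : ContinuousAt k (δ * u / (1 + u ^ 2)) :=
    (hk.differentiableAt ((cskOmega_isOpen δ).mem_nhds (csk_joukowski_mem δ hδ _ hv))).continuousAt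
  have hden : Tendsto (fun n : ℕ => 1 + (((n + 1 : ℝ) / (n + 2) * u : ℝ) : ℂ) ^ 2) atTop
      (𝓝 (1 + (u : ℂ) ^ 2)) := tendsto_const_nhds.add (hru.pow 2)
  have hlim := (hkc.tendsto.comp ((tendsto_const_nhds.mul hru).div hden hne)).div hden hne
  have hlim2 := ((Complex.continuous_re.tendsto _).comp hlim).const_mul (1 + u ^ 2)
  have hval : (k ((δ * a / 2 : ℝ) : ℂ)).re
      = (1 + u ^ 2) * (k (δ * u / (1 + u ^ 2)) / (1 + (u : ℂ) ^ 2)).re := by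
    have e1 : (1 + (u : ℂ) ^ 2) = ((1 + u ^ 2 : ℝ) : ℂ) := by push_cast; rfl
    have e2 : (δ : ℂ) * u / (1 + u ^ 2) = ((δ * a / 2 : ℝ) : ℂ) := by
      have : δ * a / 2 = δ * (u / (1 + u ^ 2)) := by rw [hau]; ring
      rw [this]; push_cast; ring
    rw [e2, e1, Complex.div_ofReal_re]
    have : 1 + u ^ 2 ≠ 0 := by positivity
    field_simp
  rw [hval]
  exact hlim2
lemma csk_memV_of_stieltjes (V : ℝ → ℝ) (ν : Measure ℝ) [IsProbabilityMeasure ν] (L : ℝ) (hL : 0 < L)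
    (hsupp : ν (Set.Icc (-L) L)ᶜ = 0) (hV : AnalyticAt ℝ V 0) (hV0 : V 0 = 1)
    (h : ∀ᶠ m : ℝ in 𝓝 0, ∫ x, 1 / (1 - m / (V m + m ^ 2) * x) ∂ν = (V m + m ^ 2) / V m) :
    memV V := by
  have hae : ∀ᵐ x ∂ν, |x| ≤ L := by
    rw [ae_iff]
    convert hsupp using 2
    ext x
    simp [abs_le]
  have hVc : ContinuousAt V 0 := hV.continuousAt
  have hVpos : ∀ᶠ m in 𝓝 0, 0 < V m := hVc.eventually (lt_mem_nhds (by rw [hV0]; norm_num))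
  have hdc : ContinuousAt (fun m => V m + m ^ 2) 0 := hVc.add (by fun_prop)
  have hwc : ContinuousAt (fun m => m / (V m + m ^ 2)) 0 :=
    continuousAt_id.div hdc (by simp [hV0])
  have hwc0 : Tendsto (fun m => m / (V m + m ^ 2)) (𝓝 0) (𝓝 0) := by
    have := hwc.tendsto
    simpa using this
  have hwsmall : ∀ᶠ m in 𝓝 0, |m / (V m + m ^ 2)| < 1 / (2 * L) := by
    have := hwc0.abs
    rw [abs_zero] at this
    exact this.eventually (gt_mem_nhds (by positivity))
  have hden : ∀ w : ℝ, |w| < 1 / (2 * L) → ∀ᵐ x ∂ν, 1 / 2 ≤ 1 - w * x := by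
    intro w hw
    filter_upwards [hae] with x hx
    have h1 : |w * x| ≤ 1 / 2 := by
      rw [abs_mul]
      calc |w| * |x| ≤ 1 / (2 * L) * L := by gcongr
        _ = 1 / 2 := by field_simp
    linarith [le_abs_self (w * x)]
  have hIntg : ∀ (j : ℕ) (w : ℝ), |w| < 1 / (2 * L) → Integrable (fun x => x ^ j / (1 - w * x)) ν := by
    intro j w hw
    refine Integrable.of_bound (C := 2 * L ^ j) (by apply Measurable.aestronglyMeasurable; fun_prop) ?_
    filter_upwards [hae, hden w hw] with x hx hd
    rw [Real.norm_eq_abs, abs_div, abs_pow, abs_of_pos (by linarith : 0 < 1 - w * x),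
      div_le_iff₀ (by linarith)]
    have h1 : |x| ^ j ≤ L ^ j := by gcongr
    have h2 : 0 ≤ L ^ j := by positivity
    nlinarith
  have hIntg' : ∀ j : ℕ, Integrable (fun x => x ^ j) ν := by
    intro j
    have := hIntg j 0 (by simp [hL])
    simpa using this
  have hlim : ∀ j : ℕ, Tendsto (fun m => ∫ x, x ^ j / (1 - m / (V m + m ^ 2) * x) ∂ν) (𝓝[≠] 0)
      (𝓝 (∫ x, x ^ j ∂ν)) := by
    intro j
    refine Tendsto.mono_left ?_ nhdsWithin_le_nhds
    refine tendsto_integral_filter_of_dominated_convergence (fun _ => 2 * L ^ j) ?_ ?_ ?_ ?_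
    · exact Eventually.of_forall fun m => by apply Measurable.aestronglyMeasurable; fun_prop
    · filter_upwards [hwsmall] with m hm
      filter_upwards [hae, hden _ hm] with x hx hd
      rw [Real.norm_eq_abs, abs_div, abs_pow, abs_of_pos (by linarith : 0 < 1 - _ * x),
        div_le_iff₀ (by linarith)]
      have h1 : |x| ^ j ≤ L ^ j := by gcongr
      have h2 : 0 ≤ L ^ j := by positivity
      nlinarith
    · exact integrable_const _
    · refine Eventually.of_forall fun x => ?_
      have h1 : Tendsto (fun m => 1 - m / (V m + m ^ 2) * x) (𝓝 0) (𝓝 (1 - 0 * x)) :=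
        tendsto_const_nhds.sub (hwc0.mul_const x)
      have h2 : Tendsto (fun m => x ^ j / (1 - m / (V m + m ^ 2) * x)) (𝓝 0)
          (𝓝 (x ^ j / (1 - 0 * x))) := tendsto_const_nhds.div h1 (by simp)
      simpa using h2
  have hstep : ∀ (j : ℕ) (w : ℝ), |w| < 1 / (2 * L) → w ≠ 0 →
      ∫ x, x ^ (j + 1) / (1 - w * x) ∂ν = (∫ x, x ^ j / (1 - w * x) ∂ν - ∫ x, x ^ j ∂ν) / w := by
    intro j w hw hw0
    rw [← integral_sub (hIntg j w hw) (hIntg' j), ← integral_div]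
    apply integral_congr_ae
    filter_upwards [hden w hw] with x hd
    have : 1 - w * x ≠ 0 := by linarith
    field_simp
    ring
  have hne : ∀ᶠ m : ℝ in 𝓝[≠] 0, m ≠ 0 := eventually_mem_nhdsWithin
  have hI1 : ∀ᶠ m in 𝓝[≠] 0, ∫ x, x ^ 1 / (1 - m / (V m + m ^ 2) * x) ∂ν
      = m * (V m + m ^ 2) / V m := by
    filter_upwards [hne, h.filter_mono nhdsWithin_le_nhds, hVpos.filter_mono nhdsWithin_le_nhds,
      hwsmall.filter_mono nhdsWithin_le_nhds] with m hm h1 hv hw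
    have hd : 0 < V m + m ^ 2 := by positivity
    have := hstep 0 _ hw (by positivity)
    simp only [zero_add, pow_zero] at this
    rw [this, h1]
    simp
    field_simp
    ring
  have hmean : ∫ x, x ∂ν = 0 := by
    have h1 := (hlim 1).congr' hI1
    have h2 : Tendsto (fun m => m * (V m + m ^ 2) / V m) (𝓝[≠] 0) (𝓝 (0 * (V 0 + 0 ^ 2) / V 0)) := by
      refine Tendsto.mono_left ?_ nhdsWithin_le_nhds
      exact ((continuousAt_id.mul hdc).div hVc (by simp [hV0])).tendsto
    have := tendsto_nhds_unique h1 h2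
    simpa using this
  have hI2 : ∀ᶠ m in 𝓝[≠] 0, ∫ x, x ^ 2 / (1 - m / (V m + m ^ 2) * x) ∂ν
      = (V m + m ^ 2) ^ 2 / V m := by
    filter_upwards [hne, hI1, hVpos.filter_mono nhdsWithin_le_nhds,
      hwsmall.filter_mono nhdsWithin_le_nhds] with m hm h1 hv hw
    have hd : 0 < V m + m ^ 2 := by positivity
    have := hstep 1 _ hw (by positivity)
    rw [this, h1]
    simp only [pow_one, hmean]
    field_simp
    ring
  have hvar : ∫ x, x ^ 2 ∂ν = 1 := by
    have h1 := (hlim 2).congr' hI2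
    have h2 : Tendsto (fun m => (V m + m ^ 2) ^ 2 / V m) (𝓝[≠] 0) (𝓝 ((V 0 + 0 ^ 2) ^ 2 / V 0)) := by
      refine Tendsto.mono_left ?_ nhdsWithin_le_nhds
      exact ((hdc.pow 2).div hVc (by simp [hV0])).tendsto
    have := tendsto_nhds_unique h1 h2
    simpa [hV0] using this
  refine ⟨ν, ⟨inferInstance, ⟨L, hsupp⟩, ?_, hmean⟩, hvar, hV, by rw [hV0]; norm_num, ?_⟩
  · intro a ha
    rw [ha] at hmean hvar
    simp at hmean hvar
    rw [hmean] at hvar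
    norm_num at hvar
  · obtain ⟨ε, hε, hball⟩ := Metric.eventually_nhds_iff.1 ((h.and hVpos).and hwsmall)
    refine ⟨ε, hε, fun m hm => ?_⟩
    obtain ⟨⟨h1, hv⟩, hw⟩ := hball (by simpa using hm)
    have hd : 0 < V m + m ^ 2 := by positivity
    have hker : ∀ x, cskKernel V m x = V m / (V m + m ^ 2) * (1 / (1 - m / (V m + m ^ 2) * x)) := by
      intro x
      unfold cskKernel
      have : V m + m * (m - x) = (V m + m ^ 2) * (1 - m / (V m + m ^ 2) * x) := by
        field_simp; ring
      rw [this, div_mul_div_comm, mul_one]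
    have hk1 : ∫ x, cskKernel V m x ∂ν = 1 := by
      simp_rw [hker]
      rw [integral_const_mul, h1]
      field_simp
    refine ⟨?_, hk1, ?_⟩
    · filter_upwards [hden _ hw] with x hx
      rw [hker]
      have : 0 < 1 - m / (V m + m ^ 2) * x := by linarith
      positivity
    · by_cases hm0 : m = 0
      · subst hm0
        have : ∀ x, x * cskKernel V 0 x = x := by
          intro x; simp [cskKernel, hV0]
        simp_rw [this, hmean]
      · have hki : Integrable (fun x => cskKernel V m x) ν := by
          simp_rw [hker]
          have := (hIntg 0 _ hw).const_mul (V m / (V m + m ^ 2))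
          simpa using this
        have : ∫ x, x * cskKernel V m x ∂ν
            = ∫ x, ((V m + m ^ 2) / m * cskKernel V m x - V m / m) ∂ν := by
          apply integral_congr_ae
          filter_upwards [hden _ hw] with x hx
          rw [hker]
          have hx' : 1 - m / (V m + m ^ 2) * x ≠ 0 := by linarith
          have hd' : V m + m ^ 2 ≠ 0 := hd.ne'
          generalize V m + m ^ 2 = D at hx' hd'
          obtain ⟨q, hq⟩ : ∃ q, q = 1 - m / D * x := ⟨_, rfl⟩
          have hxq : x = (1 - q) * D / m := by rw [hq]; field_simp; ring
          rw [← hq] at hx' ⊢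
          rw [hxq]
          field_simp
        rw [this, integral_sub (hki.const_mul _) (integrable_const _), integral_const_mul, hk1]
        simp
        field_simp
        ring

/-- The Picard iterates for the functional equation `k = 1 / (1 - w R(w k))`. -/
def cskIter (R : ℂ → ℂ) : ℕ → ℂ → ℂ
  | 0, _ => 1
  | n + 1, w => 1 / (1 - w * R (w * cskIter R n w))

lemma csk_memV_of_R (V : ℝ → ℝ) (hV : AnalyticAt ℝ V 0) (hV0 : V 0 = 1) (R : ℂ → ℂ) (δ0 : ℝ)
    (hδ0 : 0 < δ0) (hR : DifferentiableOn ℂ R (CskOmega δ0))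
    (hpos : ∀ w : ℂ, w.im ≠ 0 → 0 ≤ (R w).im * w.im)
    (hreal : ∀ t : ℝ, |t| < δ0 → (R t).im = 0) (hR0 : R 0 = 0)
    (hlip : ∀ s t : ℝ, |s| < δ0 → |t| < δ0 → ‖R s - R t‖ ≤ 2 * |s - t|)
    (hinv : ∀ᶠ m : ℝ in 𝓝 0, R ((m / V m : ℝ) : ℂ) = m) : memV V := by
  obtain ⟨δ, hδdef⟩ : ∃ δ, δ = min (δ0 / 2) (1 / 4) := ⟨_, rfl⟩
  have hδ : 0 < δ := by rw [hδdef]; positivity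
  have hδ1 : 2 * δ ≤ δ0 := by have := min_le_left (δ0 / 2) (1 / 4 : ℝ); rw [hδdef]; linarith
  have hδ2 : δ ≤ 1 / 4 := by rw [hδdef]; exact min_le_right _ _
  -- positivity off the real axis
  have hP : ∀ n, ∀ w : ℂ, w.im ≠ 0 → 0 < (w * cskIter R n w).im * w.im ∧
      1 - w * R (w * cskIter R n w) ≠ 0 := by
    intro n
    -- general step
    have key : ∀ w g : ℂ, w.im ≠ 0 → 0 < g.im * w.im →
        1 - w * R g ≠ 0 ∧ 0 < (w * (1 / (1 - w * R g))).im * w.im := by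
      intro w g hw hg
      have hg0 : g.im ≠ 0 := by rintro h; simp [h] at hg
      have hRg : 0 ≤ (R g).im * w.im := by
        have h1 := hpos g hg0
        have h2 : 0 ≤ ((R g).im * w.im) * (g.im * g.im) := by
          have : ((R g).im * w.im) * (g.im * g.im) = ((R g).im * g.im) * (g.im * w.im) := by ring
          rw [this]; positivity
        have h3 : 0 < g.im * g.im := mul_self_pos.2 hg0
        exact nonneg_of_mul_nonneg_left h2 h3
      have hw0 : w ≠ 0 := by rintro rfl; simp at hw
      obtain ⟨z, hz⟩ : ∃ z, z = 1 / w - R g := ⟨_, rfl⟩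
      have hzim : z.im * w.im < 0 := by
        rw [hz, Complex.sub_im, one_div, Complex.inv_im, sub_mul]
        have hn : 0 < Complex.normSq w := Complex.normSq_pos.2 hw0
        have : -w.im / Complex.normSq w * w.im < 0 := by
          have : -w.im / Complex.normSq w * w.im = -(w.im * w.im / Complex.normSq w) := by ring
          rw [this]
          have : 0 < w.im * w.im := mul_self_pos.2 hw
          simp only [Left.neg_neg_iff]
          positivity
        linarith
      have hz0 : z ≠ 0 := by rintro h; simp [h] at hzim
      have e : 1 - w * R g = w * z := by rw [hz]; field_simp
      refine ⟨by rw [e]; exact mul_ne_zero hw0 hz0, ?_⟩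
      have e2 : w * (1 / (1 - w * R g)) = z⁻¹ := by rw [e]; field_simp
      rw [e2, Complex.inv_im]
      have hn : 0 < Complex.normSq z := Complex.normSq_pos.2 hz0
      have : -z.im / Complex.normSq z * w.im = -(z.im * w.im) / Complex.normSq z := by ring
      rw [this]
      apply div_pos _ hn
      linarith
    induction n with
    | zero =>
      intro w hw
      have h1 : 0 < (w * cskIter R 0 w).im * w.im := by
        simp only [cskIter, mul_one]; exact mul_self_pos.2 hw
      exact ⟨h1, (key w _ hw h1).1⟩
    | succ n ih =>
      intro w hw
      have h1 : 0 < (w * cskIter R (n + 1) w).im * w.im := by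
        have := (key w _ hw (ih w hw).1).2
        simpa only [cskIter] using this
      exact ⟨h1, (key w _ hw h1).1⟩
  -- bounds on the real axis
  have hB : ∀ n, ∀ t : ℝ, |t| < δ → (cskIter R n t).im = 0 ∧ ‖cskIter R n t‖ ≤ 2 := by
    intro n
    induction n with
    | zero => intro t ht; simp [cskIter]
    | succ n ih =>
      intro t ht
      obtain ⟨h1, h2⟩ := ih t ht
      obtain ⟨r, hr⟩ : ∃ r : ℝ, cskIter R n t = r := ⟨(cskIter R n t).re, by
        apply Complex.ext <;> simp [h1]⟩
      rw [hr] at h2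
      rw [Complex.norm_real, Real.norm_eq_abs] at h2
      have h3 : |t * r| < δ0 := by
        rw [abs_mul]
        nlinarith [abs_nonneg t, abs_nonneg r]
      have h4 := hreal _ h3
      have h5 := hlip (t * r) 0 h3 (by simpa using hδ0)
      simp only [Complex.ofReal_zero, hR0, sub_zero] at h5
      obtain ⟨q, hq⟩ : ∃ q : ℝ, R ((t * r : ℝ) : ℂ) = q := ⟨(R ((t * r : ℝ) : ℂ)).re, by
        apply Complex.ext
        · simp
        · rw [h4]; simp⟩
      rw [hq, Complex.norm_real, Real.norm_eq_abs] at h5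
      have e : cskIter R (n + 1) t = ((1 / (1 - t * q) : ℝ) : ℂ) := by
        simp only [cskIter, hr]
        rw [← Complex.ofReal_mul, hq]
        push_cast; rfl
      rw [e]
      refine ⟨Complex.ofReal_im _, ?_⟩
      rw [Complex.norm_real, Real.norm_eq_abs]
      have h6 : |t * q| ≤ 1 / 2 := by
        rw [abs_mul] at h5 ⊢
        have ht' := abs_nonneg t
        have : |q| ≤ 1 := by nlinarith [abs_nonneg r]
        nlinarith [abs_nonneg q]
      have h7 : 1 / 2 ≤ 1 - t * q := by linarith [le_abs_self (t * q)]
      rw [abs_of_pos (by positivity), div_le_iff₀ (by linarith)]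
      linarith
  -- arguments stay in the domain
  have hdom : ∀ n, ∀ w ∈ CskOmega δ, w * cskIter R n w ∈ CskOmega δ0 ∧
      1 - w * R (w * cskIter R n w) ≠ 0 := by
    intro n w hw
    by_cases hwi : w.im = 0
    · have ht : |w.re| < δ := hw hwi
      obtain ⟨t, rfl⟩ : ∃ t : ℝ, w = t := ⟨w.re, by apply Complex.ext <;> simp [hwi]⟩
      simp only [Complex.ofReal_re] at ht
      obtain ⟨h1, h2⟩ := hB n t ht
      obtain ⟨r, hr⟩ : ∃ r : ℝ, cskIter R n t = r := ⟨(cskIter R n t).re, by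
        apply Complex.ext <;> simp [h1]⟩
      rw [hr] at h2 ⊢
      rw [Complex.norm_real, Real.norm_eq_abs] at h2
      have h3 : |t * r| < δ0 := by
        rw [abs_mul]
        nlinarith [abs_nonneg t, abs_nonneg r]
      refine ⟨fun _ => by simpa using h3, ?_⟩
      have h5 := hlip (t * r) 0 h3 (by simpa using hδ0)
      simp only [Complex.ofReal_zero, hR0, sub_zero] at h5
      intro h0
      have h6 : (t : ℂ) * R (t * r) = 1 := by linear_combination -h0
      have h7 : |t| * ‖R ((t * r : ℝ) : ℂ)‖ = 1 := by
        have := congrArg norm h6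
        rw [norm_mul, Complex.norm_real, Real.norm_eq_abs, norm_one] at this
        push_cast; exact this
      rw [abs_mul] at h5
      have : ‖R ((t * r : ℝ) : ℂ)‖ ≤ 1 := by nlinarith [abs_nonneg r, abs_nonneg t]
      nlinarith [abs_nonneg t]
    · refine ⟨fun h => ?_, (hP n w hwi).2⟩
      have := (hP n w hwi).1
      rw [h] at this
      simp at this
  have hdiff : ∀ n, DifferentiableOn ℂ (cskIter R n) (CskOmega δ) := by
    intro n
    induction n with
    | zero => exact differentiableOn_const 1
    | succ n ih =>
      have h1 : DifferentiableOn ℂ (fun w => R (w * cskIter R n w)) (CskOmega δ) :=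
        hR.comp (differentiableOn_id.mul ih) (fun w hw => (hdom n w hw).1)
      have h2 : DifferentiableOn ℂ (fun w => 1 / (1 - w * R (w * cskIter R n w))) (CskOmega δ) :=
        (differentiableOn_const 1).div ((differentiableOn_const 1).sub (differentiableOn_id.mul h1))
          (fun w hw => (hdom n w hw).2)
      exact h2
  have hzero : ∀ n, cskIter R n 0 = 1 := by
    intro n
    cases n <;> simp [cskIter]
  have hQ : ∀ n, ∃ Q : ProbabilityMeasure CskI, ∀ a : ℝ, |a| < 1 →
      ∫ x, 1 / (1 - a * (x : ℝ)) ∂(Q : Measure CskI) = (cskIter R n ((δ * a / 2 : ℝ) : ℂ)).re := by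
    intro n
    refine csk_nevanlinna (cskIter R n) δ hδ (hdiff n) (hzero n) ?_
    intro w
    by_cases hwi : w.im = 0
    · simp [hwi]
    · exact (hP n w hwi).1.le
  choose Q hQ using hQ
  obtain ⟨P, hPP⟩ := csk_limit
    {a : ℝ | |a| < 1 ∧ ∃ L, Tendsto (fun n => (cskIter R n ((δ * a / 2 : ℝ) : ℂ)).re) atTop (𝓝 L)}
    (fun a ha => ha.1) atTop Q
    (fun a => limUnder atTop (fun n => (cskIter R n ((δ * a / 2 : ℝ) : ℂ)).re))
    (by
      rintro a ⟨ha, L, hL⟩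
      refine Tendsto.congr (fun n => (hQ n a ha).symm) ?_
      exact tendsto_nhds_limUnder ⟨L, hL⟩)
  have hmeas : Measurable (fun x : CskI => 2 / δ * (x : ℝ)) := by fun_prop
  have : IsProbabilityMeasure ((P : Measure CskI).map (fun x : CskI => 2 / δ * (x : ℝ))) :=
    Measure.isProbabilityMeasure_map hmeas.aemeasurable
  refine csk_memV_of_stieltjes V ((P : Measure CskI).map (fun x : CskI => 2 / δ * (x : ℝ)))
    (2 / δ) (by positivity) ?_ hV hV0 ?_
  · rw [Measure.map_apply hmeas measurableSet_Icc.compl]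
    convert measure_empty (μ := (P : Measure CskI))
    ext x
    simp only [Set.mem_preimage, Set.mem_compl_iff, Set.mem_Icc, Set.mem_empty_iff_false, iff_false,
      not_not]
    obtain ⟨h1, h2⟩ := x.2
    have : 0 < 2 / δ := by positivity
    constructor <;> nlinarith
  · have hVc : ContinuousAt V 0 := hV.continuousAt
    have hVpos : ∀ᶠ m in 𝓝 0, 1 / 2 < V m := hVc.eventually (lt_mem_nhds (by rw [hV0]; norm_num))
    have hdc : ContinuousAt (fun m => V m + m ^ 2) 0 := hVc.add (by fun_prop)
    have hwc : ContinuousAt (fun m => m / (V m + m ^ 2)) 0 :=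
      continuousAt_id.div hdc (by simp [hV0])
    have hw0 : ∀ᶠ m in 𝓝 0, |m / (V m + m ^ 2)| < δ / 2 := by
      have := hwc.tendsto.abs
      simp only [zero_div, abs_zero] at this
      exact this.eventually (gt_mem_nhds (by positivity))
    have hm0 : ∀ᶠ m : ℝ in 𝓝 0, |m| < δ0 / 2 := by
      have := (continuous_abs.tendsto (0:ℝ))
      rw [abs_zero] at this
      exact this.eventually (gt_mem_nhds (by positivity))
    have hm1 : ∀ᶠ m : ℝ in 𝓝 0, |m| < 1 / 2 := by
      have := (continuous_abs.tendsto (0:ℝ))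
      rw [abs_zero] at this
      exact this.eventually (gt_mem_nhds (by positivity))
    filter_upwards [hVpos, hw0, hm0, hinv, hm1] with m hv hw hm hi hm1
    obtain ⟨w, hwdef⟩ : ∃ w, w = m / (V m + m ^ 2) := ⟨_, rfl⟩
    obtain ⟨κ, hκ⟩ : ∃ κ, κ = (V m + m ^ 2) / V m := ⟨_, rfl⟩
    have hD : 0 < V m + m ^ 2 := by positivity
    have hvp : 0 < V m := by linarith
    rw [← hwdef] at hw
    have hwκ : w * κ = m / V m := by rw [hwdef, hκ]; field_simp
    have hwδ : |w| < δ := by linarith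
    have hmV : |w * κ| < δ0 := by
      rw [hwκ, abs_div, abs_of_pos hvp, div_lt_iff₀ hvp]; nlinarith
    have hfix : (κ : ℂ) = 1 / (1 - w * R ((w * κ : ℝ) : ℂ)) := by
      rw [hwκ, hi, ← Complex.ofReal_mul, ← Complex.ofReal_one, ← Complex.ofReal_sub,
        ← Complex.ofReal_div]
      congr 1
      have : 1 - w * m = V m / (V m + m ^ 2) := by rw [hwdef]; field_simp; ring
      rw [this, hκ]
      field_simp
    have hκ1 : |κ| ≤ 2 := by
      have hκp : 0 < κ := by rw [hκ]; positivity
      rw [abs_of_pos hκp, hκ, div_le_iff₀ hvp]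
      have := abs_lt.1 hm1
      nlinarith
    have hcontr : ∀ n, ‖cskIter R (n + 1) w - κ‖ ≤ 1 / 2 * ‖cskIter R n w - κ‖ := by
      intro n
      obtain ⟨h1, h2⟩ := hB n w hwδ
      have h2' := (hB (n + 1) w hwδ).2
      have hA := (hdom n w (fun _ => by simpa using hwδ)).2
      obtain ⟨r, hr⟩ : ∃ r : ℝ, cskIter R n w = r := ⟨(cskIter R n w).re, by
        apply Complex.ext <;> simp [h1]⟩
      have hk' : cskIter R (n + 1) w = 1 / (1 - w * R (w * cskIter R n w)) := rfl
      rw [hr] at h2 hA hk' ⊢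
      rw [Complex.norm_real, Real.norm_eq_abs] at h2
      have h3 : |w * r| < δ0 := by
        rw [abs_mul]
        nlinarith [abs_nonneg w, abs_nonneg r]
      have h4 := hlip (w * r) (w * κ) h3 hmV
      have hκ0 : (κ : ℂ) ≠ 0 := by
        have : 0 < κ := by rw [hκ]; positivity
        exact_mod_cast this.ne'
      have hBne : 1 - w * R ((w * κ : ℝ) : ℂ) ≠ 0 := by
        intro h; rw [h] at hfix; simp at hfix
        exact hκ0 (by simp [hfix])
      have e1 : cskIter R (n + 1) w * (1 - w * R ((w * r : ℝ) : ℂ)) = 1 := by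
        rw [hk']; push_cast; field_simp
      have e2 : (κ : ℂ) * (1 - w * R ((w * κ : ℝ) : ℂ)) = 1 := by
        exact (eq_div_iff hBne).1 hfix
      have e3 : cskIter R (n + 1) w - κ = cskIter R (n + 1) w * κ * w *
          (R ((w * r : ℝ) : ℂ) - R ((w * κ : ℝ) : ℂ)) := by
        linear_combination (-cskIter R (n + 1) w) * e2 + (κ : ℂ) * e1
      rw [e3, norm_mul, norm_mul, norm_mul, Complex.norm_real, Complex.norm_real,
        ← Complex.ofReal_sub, Complex.norm_real, Real.norm_eq_abs, Real.norm_eq_abs,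
        Real.norm_eq_abs]
      have e4 : |w * r - w * κ| = |w| * |r - κ| := by rw [← mul_sub, abs_mul]
      rw [e4] at h4
      have hw4 : |w| ≤ 1 / 4 := by linarith
      calc _ ≤ 2 * 2 * (1 / 4) * (2 * (|w| * |r - κ|)) := by gcongr
        _ ≤ 2 * 2 * (1 / 4) * (2 * (1 / 4 * |r - κ|)) := by gcongr
        _ = _ := by ring
    have htend : Tendsto (fun n => cskIter R n w) atTop (𝓝 (κ : ℂ)) := by
      have hb : ∀ n, ‖cskIter R n w - κ‖ ≤ (1 / 2) ^ n * ‖cskIter R 0 w - κ‖ := by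
        intro n
        induction n with
        | zero => simp
        | succ n ih =>
          calc _ ≤ _ := hcontr n
            _ ≤ 1 / 2 * ((1 / 2) ^ n * ‖cskIter R 0 w - κ‖) := by gcongr
            _ = _ := by ring
      rw [tendsto_iff_norm_sub_tendsto_zero]
      refine squeeze_zero (fun n => norm_nonneg _) hb ?_
      have := (tendsto_pow_atTop_nhds_zero_of_lt_one (r := (1 / 2 : ℝ)) (by norm_num)
        (by norm_num)).mul_const ‖cskIter R 0 w - κ‖
      simpa using this
    have ha : δ * (2 * w / δ) / 2 = w := by field_simp
    have htre : Tendsto (fun n => (cskIter R n ((δ * (2 * w / δ) / 2 : ℝ) : ℂ)).re) atTop (𝓝 κ) := by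
      rw [ha]
      have := (Complex.continuous_re.tendsto (κ : ℂ)).comp htend
      rw [Complex.ofReal_re] at this
      exact this
    have hfin := hPP (2 * w / δ) ⟨by
      rw [abs_div, abs_mul, abs_of_pos hδ, div_lt_one hδ]; simp; linarith, κ, htre⟩
    rw [htre.limUnder_eq] at hfin
    rw [integral_map hmeas.aemeasurable (by apply Measurable.aestronglyMeasurable; fun_prop),
      ← hκ, ← hfin, ← hwdef]
    congr 1
    ext x
    congr 2
    ring

section CskConformal
variable {ι : Type} [Fintype ι]

/-- The function `log (m / V m)` on the upper half plane. -/
def cskF (β p : ι → ℝ) (m : ℂ) : ℂ := log m - ∑ k, (p k : ℂ) * log (1 + β k * m)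

/-- `m F'(m)`. -/
def cskE (β p : ι → ℝ) (m : ℂ) : ℂ := 1 - ∑ k, (p k : ℂ) * (β k * m / (1 + β k * m))

lemma csk_im_one_add (b : ℝ) (m : ℂ) : (1 + b * m).im = b * m.im := by simp

lemma csk_one_add_slit {b : ℝ} (hb : 0 < b) {m : ℂ} (hm : 0 < m.im) :
    1 + b * m ∈ slitPlane := by
  rw [mem_slitPlane_iff]
  right
  rw [csk_im_one_add]
  positivity

lemma csk_slit {m : ℂ} (hm : 0 < m.im) : m ∈ slitPlane := by
  rw [mem_slitPlane_iff]; right; exact hm.ne'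

lemma cskF_strict (β p : ι → ℝ) (hβ : ∀ k, 0 < β k) {m : ℂ} (hm : 0 < m.im) :
    HasStrictDerivAt (cskF β p) (cskE β p m / m) m := by
  have hm0 := slitPlane_ne_zero (csk_slit hm)
  have h1 : HasStrictDerivAt log m⁻¹ m := hasStrictDerivAt_log (csk_slit hm)
  have h2 : ∀ k ∈ (Finset.univ : Finset ι), HasStrictDerivAt (fun m : ℂ => (p k : ℂ) * log (1 + β k * m))
      ((p k : ℂ) * (β k / (1 + β k * m))) m := by
    intro k _
    have h3 : HasStrictDerivAt (fun m : ℂ => 1 + (β k : ℂ) * m) (β k) m := by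
      simpa using ((hasStrictDerivAt_id m).const_mul (β k : ℂ)).const_add 1
    exact (h3.clog (csk_one_add_slit (hβ k) hm)).const_mul _
  have h4 := h1.sub (HasStrictDerivAt.fun_sum h2)
  refine h4.congr_deriv ?_
  rw [cskE, sub_div, Finset.sum_div]
  congr 1
  · simp
  · refine Finset.sum_congr rfl fun k _ => ?_
    field_simp

lemma cskE_im_neg [Nonempty ι] (β p : ι → ℝ) (hβ : ∀ k, 0 < β k) (hp : ∀ k, 0 < p k) {m : ℂ}
    (hm : 0 < m.im) : (cskE β p m).im < 0 := by
  have h : ∀ k, 0 < ((p k : ℂ) * (β k * m / (1 + β k * m))).im := by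
    intro k
    have hne := slitPlane_ne_zero (csk_one_add_slit (hβ k) hm)
    have e : (β k * m / (1 + β k * m) : ℂ) = 1 - (1 + β k * m)⁻¹ := by field_simp; ring
    rw [e, Complex.im_ofReal_mul, Complex.sub_im, Complex.inv_im, csk_im_one_add]
    have := Complex.normSq_pos.2 hne
    have h1 := hβ k
    have h2 := hp k
    have h3 : 0 < β k * m.im / normSq (1 + β k * m) := by positivity
    rw [Complex.one_im, zero_sub, neg_div, neg_neg]
    positivity
  rw [cskE, Complex.sub_im, Complex.im_sum, Complex.one_im, zero_sub, neg_lt_zero]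
  exact Finset.sum_pos (fun k _ => h k) Finset.univ_nonempty

lemma cskF_inj [Nonempty ι] (β p : ι → ℝ) (hβ : ∀ k, 0 < β k) (hp : ∀ k, 0 < p k) {m₁ m₂ : ℂ}
    (h₁ : 0 < m₁.im) (h₂ : 0 < m₂.im) (h : cskF β p m₁ = cskF β p m₂) : m₁ = m₂ := by
  by_contra hne
  have hm1 := slitPlane_ne_zero (csk_slit h₁)
  have hm2 := slitPlane_ne_zero (csk_slit h₂)
  obtain ⟨u₁, hu1⟩ : ∃ u, u = log m₁ := ⟨_, rfl⟩
  obtain ⟨u₂, hu2⟩ : ∃ u, u = log m₂ := ⟨_, rfl⟩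
  have e1 : exp u₁ = m₁ := by rw [hu1, exp_log hm1]
  have e2 : exp u₂ = m₂ := by rw [hu2, exp_log hm2]
  have hstrip : ∀ m : ℂ, 0 < m.im → 0 < (log m).im ∧ (log m).im < Real.pi := by
    intro m hm
    rw [log_im]
    refine ⟨?_, ?_⟩
    · have h0 := arg_nonneg_iff.2 hm.le
      refine lt_of_le_of_ne h0 ?_
      intro h
      have := (arg_eq_zero_iff.1 h.symm).2
      linarith
    · refine lt_of_le_of_ne (arg_le_pi m) ?_
      intro h
      have := (arg_eq_pi_iff.1 h).2
      linarith
  have s1 := hstrip m₁ h₁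
  have s2 := hstrip m₂ h₂
  rw [← hu1] at s1
  rw [← hu2] at s2
  have hd : u₂ - u₁ ≠ 0 := by
    intro h0
    apply hne
    rw [← e1, ← e2, sub_eq_zero.1 h0]
  have hpt : ∀ t : ℝ, t ∈ Set.Icc (0:ℝ) 1 → 0 < (exp (u₁ + t * (u₂ - u₁))).im := by
    intro t ht
    rw [exp_im]
    apply mul_pos (Real.exp_pos _)
    have : (u₁ + t * (u₂ - u₁)).im = (1 - t) * u₁.im + t * u₂.im := by simp; ring
    rw [this]
    apply Real.sin_pos_of_pos_of_lt_pi
    · rcases eq_or_lt_of_le ht.1 with h0 | h0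
      · rw [← h0]; linarith [s1.1]
      · have := mul_pos h0 s2.1
        have := mul_nonneg (sub_nonneg.2 ht.2) s1.1.le
        linarith
    · rcases eq_or_lt_of_le ht.1 with h0 | h0
      · rw [← h0]; linarith [s1.2]
      · have := mul_lt_mul_of_pos_left s2.2 h0
        have := mul_le_mul_of_nonneg_left s1.2.le (sub_nonneg.2 ht.2)
        linarith
  have hder : ∀ t : ℝ, t ∈ Set.Icc (0:ℝ) 1 →
      HasDerivAt (fun t : ℝ => (cskF β p (exp (u₁ + t * (u₂ - u₁))) / (u₂ - u₁)).im)
        (cskE β p (exp (u₁ + t * (u₂ - u₁)))).im t := by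
    intro t ht
    have hp' := hpt t ht
    have a1 : HasDerivAt (fun t : ℂ => u₁ + t * (u₂ - u₁)) (u₂ - u₁) (t : ℂ) := by
      simpa using ((hasDerivAt_id (t : ℂ)).mul_const (u₂ - u₁)).const_add u₁
    have a2 := a1.cexp
    have a3 := ((cskF_strict β p hβ hp').hasDerivAt.comp (t : ℂ) a2).div_const (u₂ - u₁)
    have a4 := a3.comp_ofReal
    have a5 := (Complex.imCLM.hasFDerivAt.comp_hasDerivAt t a4)
    refine a5.congr_deriv ?_
    simp only [Complex.imCLM_apply]
    congr 1
    have := exp_ne_zero (u₁ + t * (u₂ - u₁))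
    field_simp
  obtain ⟨c, hc, hc2⟩ := exists_hasDerivAt_eq_slope
    (fun t : ℝ => (cskF β p (exp (u₁ + t * (u₂ - u₁))) / (u₂ - u₁)).im)
    (fun t => (cskE β p (exp (u₁ + t * (u₂ - u₁)))).im) (zero_lt_one)
    (fun t ht => (hder t ht).continuousAt.continuousWithinAt)
    (fun t ht => hder t ⟨ht.1.le, ht.2.le⟩)
  have hneg := cskE_im_neg β p hβ hp (hpt c ⟨hc.1.le, hc.2.le⟩)
  rw [hc2] at hneg
  simp [e1, e2, h] at hneg

end CskConformal

section CskSurj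
variable {ι : Type} [Fintype ι]

lemma csk_arg_pos {m : ℂ} (hm : 0 < m.im) : 0 < arg m ∧ arg m < Real.pi := by
  refine ⟨?_, ?_⟩
  · have h0 := arg_nonneg_iff.2 hm.le
    refine lt_of_le_of_ne h0 ?_
    intro h
    have := (arg_eq_zero_iff.1 h.symm).2
    linarith
  · refine lt_of_le_of_ne (arg_le_pi m) ?_
    intro h
    have := (arg_eq_pi_iff.1 h).2
    linarith

lemma cskF_im (β p : ι → ℝ) (m : ℂ) :
    (cskF β p m).im = arg m - ∑ k, p k * arg (1 + β k * m) := by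
  rw [cskF, Complex.sub_im, Complex.im_sum, log_im]
  congr 1
  refine Finset.sum_congr rfl fun k _ => ?_
  rw [Complex.im_ofReal_mul, log_im]

lemma cskF_im_le (β p : ι → ℝ) (hβ : ∀ k, 0 < β k) (hp : ∀ k, 0 < p k) (k0 : ι) (hk0 : 1 ≤ p k0)
    {m : ℂ} (hm : 0 < m.im) : (cskF β p m).im ≤ arg m - arg (1 + β k0 * m) := by
  rw [cskF_im]
  have h : ∀ k, 0 < arg (1 + β k * m) := fun k =>
    (csk_arg_pos (by rw [csk_im_one_add]; exact mul_pos (hβ k) hm)).1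
  have h1 : p k0 * arg (1 + β k0 * m) ≤ ∑ k, p k * arg (1 + β k * m) :=
    Finset.single_le_sum (f := fun k => p k * arg (1 + β k * m))
      (fun k _ => (mul_pos (hp k) (h k)).le) (Finset.mem_univ k0)
  have h2 := h k0
  nlinarith

lemma csk_arg_sub {b : ℝ} (hb : 0 < b) {m : ℂ} (hm : 0 < m.im) :
    arg m - arg (1 + b * m) = arg (m * (1 + b * m)⁻¹) := by
  have h1 := csk_arg_pos hm
  have h2 : 0 < arg (1 + b * m) ∧ arg (1 + b * m) < Real.pi :=
    csk_arg_pos (by rw [csk_im_one_add]; exact mul_pos hb hm)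
  have h3 : arg (1 + b * m)⁻¹ = - arg (1 + b * m) := by
    rw [arg_inv, if_neg h2.2.ne]
  rw [arg_mul (slitPlane_ne_zero (csk_slit hm))
    (inv_ne_zero (slitPlane_ne_zero (csk_one_add_slit hb hm))), h3]
  · ring
  · rw [h3]; constructor <;> linarith

lemma csk_arg_cocompact {b : ℝ} (hb : 0 < b) :
    Tendsto (fun m : ℂ => arg (m * (1 + b * m)⁻¹)) (cocompact ℂ) (𝓝 0) := by
  have hb' : (b : ℂ) ≠ 0 := by exact_mod_cast hb.ne'
  have h1 : Tendsto (fun m : ℂ => 1 + b * m) (cocompact ℂ) (cocompact ℂ) := by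
    have : Tendsto (fun m : ℂ => (Homeomorph.addLeft (1 : ℂ)) (Homeomorph.mulLeft₀ (b : ℂ) hb' m))
        (cocompact ℂ) (cocompact ℂ) :=
      ((Homeomorph.addLeft (1 : ℂ)).isClosedEmbedding.tendsto_cocompact).comp
        ((Homeomorph.mulLeft₀ (b : ℂ) hb').isClosedEmbedding.tendsto_cocompact)
    exact this
  have h2 : Tendsto (fun m : ℂ => (1 + b * m)⁻¹) (cocompact ℂ) (𝓝 0) := by
    have := tendsto_inv₀_cobounded (α := ℂ)
    rw [Metric.cobounded_eq_cocompact] at this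
    exact this.comp h1
  have h3 : Tendsto (fun m : ℂ => (b : ℂ)⁻¹ * (1 - (1 + b * m)⁻¹)) (cocompact ℂ)
      (𝓝 ((b : ℂ)⁻¹ * (1 - 0))) := (tendsto_const_nhds.sub h2).const_mul _
  have h4 : (b : ℂ)⁻¹ * (1 - 0) = ((b⁻¹ : ℝ) : ℂ) := by push_cast; ring
  rw [h4] at h3
  have h5 : ContinuousAt arg ((b⁻¹ : ℝ) : ℂ) := continuousAt_arg (by
    rw [mem_slitPlane_iff]; left; simpa using hb)
  have h6 : arg ((b⁻¹ : ℝ) : ℂ) = 0 := arg_ofReal_of_nonneg (by positivity)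
  have h7 := h5.tendsto.comp h3
  rw [h6] at h7
  refine h7.congr' ?_
  have h8 : ∀ᶠ m : ℂ in cocompact ℂ, 1 + b * m ≠ 0 := by
    have : ∀ᶠ z : ℂ in cocompact ℂ, z ≠ 0 :=
      (isCompact_singleton (x := (0 : ℂ))).compl_mem_cocompact
    exact h1.eventually this
  filter_upwards [h8] with m hm
  simp only [Function.comp]
  congr 1
  field_simp
  ring

lemma cskF_norm (β p : ι → ℝ) (hβ : ∀ k, 0 < β k) {m : ℂ} (hm : 0 < m.im) :
    ‖exp (cskF β p m)‖ * ∏ k, ‖1 + β k * m‖ ^ (p k) = ‖m‖ := by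
  have h1 : ∀ k, ‖1 + (β k : ℂ) * m‖ ^ (p k) = ‖exp ((p k : ℂ) * log (1 + β k * m))‖ := by
    intro k
    have hne := slitPlane_ne_zero (csk_one_add_slit (hβ k) hm)
    rw [norm_exp, Complex.re_ofReal_mul, log_re, Real.rpow_def_of_pos (norm_pos_iff.2 hne), mul_comm]
  simp_rw [h1]
  rw [← norm_prod, ← exp_sum, ← norm_mul, ← exp_add, cskF, sub_add_cancel,
    exp_log (slitPlane_ne_zero (csk_slit hm))]

lemma csk_isOpen_range [Nonempty ι] (β p : ι → ℝ) (hβ : ∀ k, 0 < β k) (hp : ∀ k, 0 < p k) :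
    IsOpen {s : ℂ | ∃ m : ℂ, 0 < m.im ∧ cskF β p m = s} := by
  rw [isOpen_iff_mem_nhds]
  rintro s ⟨m, hm, rfl⟩
  have hne : cskE β p m / m ≠ 0 := by
    apply div_ne_zero _ (slitPlane_ne_zero (csk_slit hm))
    intro h
    have := cskE_im_neg β p hβ hp hm
    rw [h] at this
    simp at this
  rw [← (cskF_strict β p hβ hm).map_nhds_eq hne, mem_map]
  have : {z : ℂ | 0 < z.im} ∈ 𝓝 m := (isOpen_lt continuous_const continuous_im).mem_nhds hm
  filter_upwards [this] with z hz
  exact ⟨z, hz, rfl⟩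

lemma cskF_limit [Nonempty ι] (β p : ι → ℝ) (hβ : ∀ k, 0 < β k) (hp : ∀ k, 0 < p k) (k0 : ι)
    (hk0 : 1 ≤ p k0) (hmax : ∀ k, β k ≤ β k0) {s : ℂ} (hs : 0 < s.im) (hs' : s.im < Real.pi)
    {y : ℕ → ℂ} {a : ℂ} (hy : ∀ n, 0 < (y n).im) (hya : Tendsto y atTop (𝓝 a))
    (hF : Tendsto (fun n => cskF β p (y n)) atTop (𝓝 s)) :
    ∃ m : ℂ, 0 < m.im ∧ cskF β p m = s := by
  have hFim : Tendsto (fun n => (cskF β p (y n)).im) atTop (𝓝 s.im) :=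
    (continuous_im.tendsto s).comp hF
  have hai : 0 ≤ a.im :=
    ge_of_tendsto' ((continuous_im.tendsto a).comp hya) (fun n => (hy n).le)
  have hlin : ∀ k, Tendsto (fun n => 1 + (β k : ℂ) * y n) atTop (𝓝 (1 + β k * a)) := fun k =>
    (hya.const_mul _).const_add _
  -- norm identity in the limit
  have hnorm : ‖exp s‖ * ∏ k, ‖1 + β k * a‖ ^ (p k) = ‖a‖ := by
    have h1 : Tendsto (fun n => ‖exp (cskF β p (y n))‖ * ∏ k, ‖1 + β k * y n‖ ^ (p k)) atTop
        (𝓝 (‖exp s‖ * ∏ k, ‖1 + β k * a‖ ^ (p k))) := by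
      refine Tendsto.mul ((continuous_exp.tendsto s).comp hF).norm ?_
      refine tendsto_finsetProd _ fun k _ => ?_
      exact (hlin k).norm.rpow_const (Or.inr (hp k).le)
    have h2 : Tendsto (fun n => ‖y n‖) atTop (𝓝 ‖a‖) := hya.norm
    refine tendsto_nhds_unique h1 (h2.congr fun n => (cskF_norm β p hβ (hy n)).symm)
  have hes : ‖exp s‖ ≠ 0 := norm_ne_zero_iff.2 (exp_ne_zero s)
  have ha0 : a ≠ 0 := by
    rintro rfl
    simp at hnorm
  have hargy : ∀ k, Tendsto (fun n => arg (1 + β k * y n)) atTop (𝓝 (arg (1 + β k * a))) ∨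
      1 + β k * a = 0 := by
    intro k
    by_cases hz : 1 + β k * a = 0
    · exact Or.inr hz
    left
    by_cases hsl : 1 + β k * a ∈ slitPlane
    · exact (continuousAt_arg hsl).tendsto.comp (hlin k)
    · rw [mem_slitPlane_iff] at hsl
      push Not at hsl
      have hre : (1 + β k * a).re < 0 := by
        refine lt_of_le_of_ne hsl.1 fun h => hz (Complex.ext h hsl.2)
      have hc := continuousWithinAt_arg_of_re_neg_of_im_zero hre hsl.2
      refine hc.tendsto.comp (tendsto_nhdsWithin_iff.2 ⟨hlin k, Eventually.of_forall fun n => ?_⟩)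
      have : 0 < (1 + (β k : ℂ) * y n).im := by
        rw [csk_im_one_add]; exact mul_pos (hβ k) (hy n)
      exact this.le
  by_cases hasl : a ∈ slitPlane
  · have hsl : ∀ k, 1 + β k * a ∈ slitPlane := by
      intro k
      rw [mem_slitPlane_iff] at hasl ⊢
      rcases hasl with h | h
      · left
        have := mul_pos (hβ k) h
        simp
        linarith
      · right
        rw [csk_im_one_add]
        exact mul_ne_zero (hβ k).ne' h
    have hcont : ContinuousAt (cskF β p) a := by
      have h1 : ContinuousAt log a := continuousAt_clog hasl
      refine h1.sub (tendsto_finsetSum _ fun k _ => ?_)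
      refine Tendsto.const_mul _ ?_
      exact ContinuousAt.clog (f := fun x : ℂ => 1 + (β k : ℂ) * x) (by fun_prop) (hsl k)
    have hFa : cskF β p a = s := tendsto_nhds_unique (hcont.tendsto.comp hya) hF
    rcases hai.lt_or_eq with h | h
    · exact ⟨a, h, hFa⟩
    · exfalso
      have hare : 0 < a.re := by
        rw [mem_slitPlane_iff] at hasl
        rcases hasl with h' | h'
        · exact h'
        · exact absurd h.symm h'
      have ha : a = (a.re : ℂ) := Complex.ext rfl (by simp [← h])
      have : (cskF β p a).im = 0 := by
        rw [cskF_im, ha, arg_ofReal_of_nonneg hare.le]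
        have : ∀ k, arg (1 + β k * (a.re : ℂ)) = 0 := by
          intro k
          have e : (1 + β k * (a.re : ℂ)) = ((1 + β k * a.re : ℝ) : ℂ) := by push_cast; rfl
          rw [e, arg_ofReal_of_nonneg]
          have := mul_pos (hβ k) hare
          linarith
        simp [this]
      rw [hFa] at this
      linarith
  · exfalso
    rw [mem_slitPlane_iff] at hasl
    push Not at hasl
    have hare : a.re < 0 := lt_of_le_of_ne hasl.1 fun h => ha0 (Complex.ext h hasl.2)
    have ha : a = (a.re : ℂ) := Complex.ext rfl (by simp [hasl.2])
    have hargm : Tendsto (fun n => arg (y n)) atTop (𝓝 Real.pi) := by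
      have hc := continuousWithinAt_arg_of_re_neg_of_im_zero hare hasl.2
      have e : arg a = Real.pi := arg_eq_pi_iff.2 ⟨hare, hasl.2⟩
      have := hc.tendsto.comp (tendsto_nhdsWithin_iff.2 ⟨hya, Eventually.of_forall fun n => (hy n).le⟩)
      rwa [e] at this
    have hcast : ∀ k, (1 + β k * a) = ((1 + β k * a.re : ℝ) : ℂ) := by
      intro k; conv_lhs => rw [ha]
      push_cast; rfl
    rcases lt_trichotomy (1 + β k0 * a.re) 0 with h | h | h
    · have h1 : Tendsto (fun n => arg (1 + β k0 * y n)) atTop (𝓝 Real.pi) := by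
        rcases hargy k0 with h1 | h1
        · rw [hcast, arg_ofReal_of_neg h] at h1; exact h1
        · rw [hcast] at h1
          exact absurd (Complex.ofReal_eq_zero.1 h1) h.ne
      have h2 := le_of_tendsto_of_tendsto' hFim (hargm.sub h1)
        (fun n => cskF_im_le β p hβ hp k0 hk0 (hy n))
      linarith
    · have : ∏ k, ‖1 + β k * a‖ ^ (p k) = 0 := by
        refine Finset.prod_eq_zero (Finset.mem_univ k0) ?_
        rw [hcast, h]
        simp [Real.zero_rpow (hp k0).ne']
      rw [this, mul_zero] at hnorm
      exact ha0 (norm_eq_zero.1 hnorm.symm)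
    · have hpos : ∀ k, 0 < 1 + β k * a.re := by
        intro k
        have := mul_le_mul_of_nonpos_right (hmax k) hare.le
        linarith
      have h1 : Tendsto (fun n => arg (y n) - ∑ k, p k * arg (1 + β k * y n)) atTop
          (𝓝 (Real.pi - ∑ k, p k * 0)) := by
        refine hargm.sub (tendsto_finsetSum _ fun k _ => Tendsto.const_mul _ ?_)
        rcases hargy k with h1 | h1
        · rw [hcast, arg_ofReal_of_nonneg (hpos k).le] at h1; exact h1
        · rw [hcast] at h1
          exact absurd (Complex.ofReal_eq_zero.1 h1) (hpos k).ne'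
      simp only [← cskF_im, mul_zero, Finset.sum_const_zero, sub_zero] at h1
      have := tendsto_nhds_unique h1 hFim
      linarith

lemma cskF_surj [Nonempty ι] (β p : ι → ℝ) (hβ : ∀ k, 0 < β k) (hp : ∀ k, 0 < p k) (k0 : ι)
    (hk0 : 1 ≤ p k0) (hmax : ∀ k, β k ≤ β k0) {s : ℂ} (hs : 0 < s.im) (hs' : s.im < Real.pi) :
    ∃ m : ℂ, 0 < m.im ∧ cskF β p m = s := by
  have hconv : IsPreconnected {s : ℂ | 0 < s.im ∧ s.im < Real.pi} := by
    apply Convex.isPreconnected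
    exact (convex_halfSpace_im_gt 0).inter (convex_halfSpace_im_lt Real.pi)
  refine hconv.subset_of_closure_inter_subset (csk_isOpen_range β p hβ hp) ?_ ?_ ⟨hs, hs'⟩
  · -- nonempty
    have hc : Tendsto (fun ε : ℝ => ∑ k, p k * arg (1 + β k * (ε * I))) (𝓝[>] 0) (𝓝 0) := by
      have : Tendsto (fun ε : ℝ => ∑ k, p k * arg (1 + β k * (ε * I))) (𝓝 0)
          (𝓝 (∑ k, p k * arg (1 + β k * (((0 : ℝ) : ℂ) * I)))) := by
        refine tendsto_finsetSum _ fun k _ => Tendsto.const_mul _ ?_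
        have h1 : ContinuousAt arg (1 + β k * (((0 : ℝ) : ℂ) * I)) := continuousAt_arg (by simp)
        have h2 : ContinuousAt (fun ε : ℝ => (1 + β k * (ε * I) : ℂ)) 0 := by fun_prop
        exact ContinuousAt.comp (f := fun ε : ℝ => (1 + β k * (ε * I) : ℂ)) h1 h2
      simp only [ofReal_zero, zero_mul, mul_zero, add_zero, arg_one, Finset.sum_const_zero] at this
      exact this.mono_left nhdsWithin_le_nhds
    have h1 : ∀ᶠ ε : ℝ in 𝓝[>] 0, ∑ k, p k * arg (1 + β k * (ε * I)) < Real.pi / 2 :=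
      hc.eventually (gt_mem_nhds (by positivity))
    obtain ⟨ε, hε, hε0⟩ := (h1.and self_mem_nhdsWithin).exists
    have hε0' : 0 < ε := hε0
    have him : 0 < ((ε : ℂ) * I).im := by simpa using hε0'
    refine ⟨cskF β p (ε * I), ⟨?_, ?_⟩, ⟨_, him, rfl⟩⟩
    · rw [cskF_im, arg_real_mul _ hε0', arg_I]; linarith
    · have h2 := cskF_im_le β p hβ hp k0 hk0 him
      have h3 := csk_arg_pos him
      have h4 : 0 < arg (1 + β k0 * ((ε : ℂ) * I)) :=
        (csk_arg_pos (by rw [csk_im_one_add]; exact mul_pos (hβ k0) him)).1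
      linarith
  · rintro s ⟨hcl, hs, hs'⟩
    obtain ⟨x, hx, hxs⟩ := mem_closure_iff_seq_limit.1 hcl
    choose m hm hms using hx
    have hF : Tendsto (fun n => cskF β p (m n)) atTop (𝓝 s) := by simpa only [hms] using hxs
    have hFim : Tendsto (fun n => (cskF β p (m n)).im) atTop (𝓝 s.im) :=
      (continuous_im.tendsto s).comp hF
    have hcoc := (csk_arg_cocompact (hβ k0)).eventually (gt_mem_nhds (half_pos hs))
    obtain ⟨K, hK, hKs⟩ := mem_cocompact.1 hcoc
    have hmK : ∀ᶠ n in atTop, m n ∈ K := by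
      filter_upwards [hFim.eventually (lt_mem_nhds (half_lt_self hs))] with n hn
      by_contra hnK
      have h1 : arg (m n * (1 + β k0 * m n)⁻¹) < s.im / 2 := hKs hnK
      rw [← csk_arg_sub (hβ k0) (hm n)] at h1
      have := cskF_im_le β p hβ hp k0 hk0 (hm n)
      linarith
    obtain ⟨a, -, φ, hφ, hφa⟩ := hK.tendsto_subseq' hmK.frequently
    exact cskF_limit β p hβ hp k0 hk0 hmax hs hs' (fun n => hm (φ n)) hφa (hF.comp hφ.tendsto_atTop)

end CskSurj

section CskInverse
variable {ι : Type} [Fintype ι]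

open ComplexConjugate in
lemma csk_local_inverse (h : ℂ → ℂ) (ha : AnalyticAt ℂ h 0) (h0 : h 0 = 0) (h1 : deriv h 0 = 1)
    (hc : ∀ᶠ m in 𝓝 0, h (conj m) = conj (h m)) :
    ∃ φ : ℂ → ℂ, φ 0 = 0 ∧ Tendsto φ (𝓝 0) (𝓝 0) ∧ (∀ᶠ w in 𝓝 0, DifferentiableAt ℂ φ w) ∧
      (∀ᶠ w in 𝓝 0, h (φ w) = w) ∧ (∀ᶠ m in 𝓝 0, φ (h m) = m) ∧
      (∀ᶠ w in 𝓝 0, φ (conj w) = conj (φ w)) ∧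
      (∃ s ∈ 𝓝 (0 : ℂ), ∀ a ∈ s, ∀ b ∈ s, ‖φ a - φ b - (a - b)‖ ≤ 1 / 2 * ‖a - b‖) := by
  have h1' : deriv h 0 ≠ 0 := by rw [h1]; exact one_ne_zero
  have hs := ha.hasStrictDerivAt
  obtain ⟨φ, hφ⟩ : ∃ φ, φ = hs.localInverse _ _ _ h1' := ⟨_, rfl⟩
  have p1 : φ 0 = 0 := by
    have : hs.localInverse _ _ _ h1' (h 0) = 0 := HasStrictFDerivAt.localInverse_apply_image ..
    rw [← hφ, h0] at this
    exact this
  have p2 : AnalyticAt ℂ φ 0 := by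
    have := ha.analyticAt_localInverse h1'
    rw [← hφ, h0] at this
    exact this
  have p3 : ∀ᶠ w in 𝓝 0, h (φ w) = w := by
    have := HasStrictDerivAt.eventually_right_inverse hs h1'
    rw [← hφ, h0] at this
    exact this
  have p4 : ∀ᶠ m in 𝓝 0, φ (h m) = m := by
    have := HasStrictDerivAt.eventually_left_inverse hs h1'
    rw [← hφ] at this
    exact this
  have p5 : HasStrictDerivAt φ 1 0 := by
    have := hs.to_localInverse h1'
    rw [← hφ, h0, h1, inv_one] at this
    exact this
  have p6 : Tendsto φ (𝓝 0) (𝓝 0) := by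
    have := p2.continuousAt.tendsto
    rwa [p1] at this
  have p7 : Tendsto (fun w => conj (φ w)) (𝓝 0) (𝓝 0) := by
    have := (continuous_conj.tendsto 0).comp p6
    rw [map_zero] at this
    exact this
  refine ⟨φ, p1, p6, ?_, p3, p4, ?_, ?_⟩
  · filter_upwards [p2.eventually_analyticAt] with w hw using hw.differentiableAt
  · filter_upwards [p3, p7.eventually p4, p6.eventually hc] with w a1 a2 a3
    rw [a3, a1] at a2
    exact a2
  · obtain ⟨s, hs, hs2⟩ := p5.hasStrictFDerivAt.approximates_deriv_on_nhds
      (c := 1 / 2) (Or.inr (by norm_num))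
    refine ⟨s, hs, fun a ha b hb => ?_⟩
    have := hs2 a ha b hb
    simpa using this

lemma csk_Rplus [Nonempty ι] (β p : ι → ℝ) (hβ : ∀ k, 0 < β k) (hp : ∀ k, 0 < p k) (k0 : ι)
    (hk0 : 1 ≤ p k0) (hmax : ∀ k, β k ≤ β k0) :
    ∃ G : ℂ → ℂ, ∀ w : ℂ, 0 < w.im →
      0 < (G w).im ∧ cskF β p (G w) = log w ∧ DifferentiableAt ℂ G w := by
  have hex : ∀ w : ℂ, ∃ m : ℂ, 0 < w.im → 0 < m.im ∧ cskF β p m = log w := by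
    intro w
    by_cases hw : 0 < w.im
    · have := csk_arg_pos hw
      obtain ⟨m, hm⟩ := cskF_surj β p hβ hp k0 hk0 hmax (s := log w)
        (by rw [log_im]; exact this.1) (by rw [log_im]; exact this.2)
      exact ⟨m, fun _ => hm⟩
    · exact ⟨0, fun h => absurd h hw⟩
  choose G hG using hex
  refine ⟨G, fun w hw => ⟨(hG w hw).1, (hG w hw).2, ?_⟩⟩
  obtain ⟨hm, hFm⟩ := hG w hw
  have hst := cskF_strict β p hβ hm
  have hne : cskE β p (G w) / G w ≠ 0 := by
    apply div_ne_zero _ (slitPlane_ne_zero (csk_slit hm))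
    intro h
    have := cskE_im_neg β p hβ hp hm
    rw [h] at this
    simp at this
  have hleft : ∀ᶠ x in 𝓝 (G w), (fun s => G (exp s)) (cskF β p x) = x := by
    have e1 : ∀ᶠ x in 𝓝 (G w), 0 < x.im :=
      (isOpen_lt continuous_const continuous_im).mem_nhds hm
    have hargw := csk_arg_pos hw
    rw [← log_im, ← hFm] at hargw
    have hcim : ContinuousAt (fun x => (cskF β p x).im) (G w) :=
      continuous_im.continuousAt.comp hst.hasDerivAt.continuousAt
    have e2 : ∀ᶠ x in 𝓝 (G w), 0 < (cskF β p x).im := hcim.eventually (lt_mem_nhds hargw.1)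
    have e3 : ∀ᶠ x in 𝓝 (G w), (cskF β p x).im < Real.pi := hcim.eventually (gt_mem_nhds hargw.2)
    filter_upwards [e1, e2, e3] with x h1 h2 h3
    have h4 : 0 < (exp (cskF β p x)).im := by
      rw [exp_im]
      exact mul_pos (Real.exp_pos _) (Real.sin_pos_of_pos_of_lt_pi h2 h3)
    obtain ⟨h5, h6⟩ := hG _ h4
    rw [log_exp (by linarith) h3.le] at h6
    exact cskF_inj β p hβ hp h5 h1 h6
  have hd := (hst.to_local_left_inverse hne (g := fun s => G (exp s)) hleft).hasDerivAt.differentiableAt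
  rw [hFm] at hd
  have hd2 : DifferentiableAt ℂ (fun z => G (exp (log z))) w :=
    DifferentiableAt.comp w (g := fun s => G (exp s)) hd (differentiableAt_log (csk_slit hw))
  refine hd2.congr_of_eventuallyEq ?_
  filter_upwards [(isOpen_lt continuous_const continuous_im).mem_nhds hw] with z hz
  have hz' : 0 < z.im := hz
  rw [exp_log (slitPlane_ne_zero (csk_slit hz'))]

/-- The complex extension of `m / V m` near `0`. -/
def cskH (β p : ι → ℝ) (m : ℂ) : ℂ := m * exp (-∑ k, (p k : ℂ) * log (1 + β k * m))

open ComplexConjugate in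
lemma csk_exists_R [Nonempty ι] (β p : ι → ℝ) (hβ : ∀ k, 0 < β k) (hp : ∀ k, 0 < p k) (k0 : ι)
    (hk0 : 1 ≤ p k0) (hmax : ∀ k, β k ≤ β k0) :
    ∃ (R : ℂ → ℂ) (δ : ℝ), 0 < δ ∧ DifferentiableOn ℂ R (CskOmega δ) ∧
      (∀ w : ℂ, w.im ≠ 0 → 0 ≤ (R w).im * w.im) ∧
      (∀ t : ℝ, |t| < δ → (R t).im = 0) ∧ R 0 = 0 ∧
      (∀ s t : ℝ, |s| < δ → |t| < δ → ‖R s - R t‖ ≤ 2 * |s - t|) ∧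
      ∀ᶠ m : ℝ in 𝓝 0, R (cskH β p m) = m := by
  obtain ⟨G, hG⟩ := csk_Rplus β p hβ hp k0 hk0 hmax
  have hSa : AnalyticAt ℂ (fun m : ℂ => ∑ k, (p k : ℂ) * log (1 + β k * m)) 0 := by
    refine Finset.analyticAt_fun_sum _ fun k _ => ?_
    refine analyticAt_const.mul ?_
    refine AnalyticAt.clog (by fun_prop) (by simp)
  have hS0 : (∑ k, (p k : ℂ) * log (1 + β k * 0)) = 0 := by simp
  have hSc := hSa.continuousAt
  have hHa : AnalyticAt ℂ (cskH β p) 0 := by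
    unfold cskH
    exact analyticAt_id.mul hSa.neg.cexp
  have hH0 : cskH β p 0 = 0 := by simp [cskH]
  have hH1 : deriv (cskH β p) 0 = 1 := by
    have h1 : HasDerivAt (cskH β p) _ 0 :=
      (hasDerivAt_id (0 : ℂ)).mul (hSa.differentiableAt.neg.cexp).hasDerivAt
    rw [h1.deriv]
    simp
  have hlogc : ∀ k, ∀ᶠ m : ℂ in 𝓝 0, 1 + (β k : ℂ) * m ∈ slitPlane := by
    intro k
    have : ContinuousAt (fun m : ℂ => 1 + (β k : ℂ) * m) 0 := by fun_prop
    exact this.eventually (isOpen_slitPlane.mem_nhds (by simp))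
  have hHc : ∀ᶠ m in 𝓝 0, cskH β p (conj m) = conj (cskH β p m) := by
    filter_upwards [eventually_all.2 hlogc] with m hm
    rw [cskH, cskH, map_mul, ← exp_conj, map_neg, map_sum]
    congr 3
    refine Finset.sum_congr rfl fun k _ => ?_
    rw [map_mul, conj_ofReal, ← log_conj _ (mem_slitPlane_iff_arg.1 (hm k)).1]
    simp
  obtain ⟨φ, f0, ft, fd, fr, fl, fc, s, hs, fs⟩ := csk_local_inverse _ hHa hH0 hH1 hHc
  have hSπ : ∀ᶠ m : ℂ in 𝓝 0, ‖∑ k, (p k : ℂ) * log (1 + β k * m)‖ < Real.pi := by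
    have := hSc.norm.tendsto
    rw [hS0, norm_zero] at this
    exact this.eventually (gt_mem_nhds Real.pi_pos)
  have hcs : ∀ᶠ w : ℂ in 𝓝 0, conj w ∈ s := by
    have := continuous_conj.tendsto (0 : ℂ)
    rw [map_zero] at this
    exact this hs
  have hs' : ∀ᶠ w : ℂ in 𝓝 0, w ∈ s := hs
  have hev := (fd.and (fr.and (fc.and ((ft.eventually hSπ).and (hs'.and hcs)))))
  obtain ⟨δ, hδ, hball⟩ := Metric.eventually_nhds_iff.1 hev
  have hb : ∀ w : ℂ, ‖w‖ < δ → DifferentiableAt ℂ φ w ∧ cskH β p (φ w) = w ∧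
      φ (conj w) = conj (φ w) ∧ ‖∑ k, (p k : ℂ) * log (1 + β k * φ w)‖ < Real.pi ∧
      w ∈ s ∧ conj w ∈ s := by
    intro w hw
    exact hball (by simpa using hw)
  -- positivity of `φ`
  have hφim : ∀ w : ℂ, ‖w‖ < δ → 0 < w.im → 0 < (φ w).im := by
    intro w hw hwi
    obtain ⟨-, -, b3, -, b5, b6⟩ := hb w hw
    have h1 := fs _ b5 _ b6
    rw [b3] at h1
    have e : φ w - conj (φ w) - (w - conj w) = ((2 * ((φ w).im - w.im) : ℝ) : ℂ) * I := by
      rw [sub_conj, sub_conj]; push_cast; ring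
    rw [e, sub_conj, norm_mul, norm_mul, norm_I, Complex.norm_real, Complex.norm_real, mul_one,
      mul_one, Real.norm_eq_abs, Real.norm_eq_abs, abs_of_pos (by positivity : 0 < 2 * w.im)] at h1
    have := (abs_le.1 h1).1
    linarith
  have hφG : ∀ w : ℂ, ‖w‖ < δ → 0 < w.im → G w = φ w := by
    intro w hw hwi
    have hm := hφim w hw hwi
    obtain ⟨-, b2, -, b4, -, -⟩ := hb w hw
    obtain ⟨g1, g2, -⟩ := hG w hwi
    refine cskF_inj β p hβ hp g1 hm ?_
    rw [g2]
    have e1 : exp (cskF β p (φ w)) = w := by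
      rw [cskF, sub_eq_add_neg, exp_add, exp_log (slitPlane_ne_zero (csk_slit hm))]
      exact b2
    have ha := csk_arg_pos hm
    have h3 : (cskF β p (φ w)).im = arg (φ w) - (∑ k, (p k : ℂ) * log (1 + β k * φ w)).im := by
      rw [cskF, Complex.sub_im, log_im]
    have h4 := (abs_le.1 (abs_im_le_norm (∑ k, (p k : ℂ) * log (1 + β k * φ w)))).2
    have h5 : (cskF β p (φ w)).im ≤ Real.pi := by
      have h6 := cskF_im_le β p hβ hp k0 hk0 hm
      have h7 : 0 < arg (1 + β k0 * φ w) :=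
        (csk_arg_pos (by rw [csk_im_one_add]; exact mul_pos (hβ k0) hm)).1
      linarith
    have h8 := log_exp (x := cskF β p (φ w)) (by linarith) h5
    rw [e1] at h8
    exact h8
  obtain ⟨R, hRdef⟩ : ∃ R : ℂ → ℂ, R = fun w => if 0 < w.im then G w else
    if w.im < 0 then conj (G (conj w)) else φ w := ⟨_, rfl⟩
  have hRp : ∀ w : ℂ, 0 < w.im → R w = G w := by
    intro w hw; rw [hRdef]; simp only [if_pos hw]
  have hRn : ∀ w : ℂ, w.im < 0 → R w = conj (G (conj w)) := by
    intro w hw; rw [hRdef]; simp only [if_neg hw.le.not_gt, if_pos hw]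
  have hRb : ∀ w : ℂ, ‖w‖ < δ → R w = φ w := by
    intro w hw
    rcases lt_trichotomy w.im 0 with h | h | h
    · rw [hRn w h, hφG (conj w) (by simpa using hw) (by simpa using h), (hb w hw).2.2.1, conj_conj]
    · rw [hRdef]; simp [h]
    · rw [hRp w h, hφG w hw h]
  refine ⟨R, δ, hδ, ?_, ?_, ?_, ?_, ?_, ?_⟩
  · intro w hw
    refine DifferentiableAt.differentiableWithinAt ?_
    rcases lt_trichotomy w.im 0 with h | h | h
    · have h1 := (hG (conj w) (by simpa using h)).2.2.conj_conj
      rw [conj_conj] at h1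
      refine h1.congr_of_eventuallyEq ?_
      filter_upwards [(isOpen_lt continuous_im continuous_const).mem_nhds h] with z hz
      exact hRn z hz
    · have hn : ‖w‖ < δ := by
        have h1 : |w.re| < δ := hw h
        have : w = (w.re : ℂ) := Complex.ext rfl (by simp [h])
        rw [this, Complex.norm_real]; exact h1
      refine (hb w hn).1.congr_of_eventuallyEq ?_
      filter_upwards [(isOpen_lt continuous_norm continuous_const).mem_nhds hn] with z hz
      exact hRb z hz
    · refine (hG w h).2.2.congr_of_eventuallyEq ?_
      filter_upwards [(isOpen_lt continuous_const continuous_im).mem_nhds h] with z hz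
      exact hRp z hz
  · intro w hw
    rcases lt_or_gt_of_ne hw with h | h
    · rw [hRn w h, conj_im]
      have := (hG (conj w) (by simpa using h)).1
      nlinarith
    · rw [hRp w h]
      exact (mul_pos (hG w h).1 h).le
  · intro t ht
    have hn : ‖(t : ℂ)‖ < δ := by rw [Complex.norm_real]; exact ht
    rw [hRb _ hn]
    have := (hb _ hn).2.2.1
    rw [conj_ofReal] at this
    exact conj_eq_iff_im.1 this.symm
  · rw [hRb 0 (by simpa using hδ), f0]
  · intro a b ha hb'
    have hna : ‖(a : ℂ)‖ < δ := by rw [Complex.norm_real]; exact ha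
    have hnb : ‖(b : ℂ)‖ < δ := by rw [Complex.norm_real]; exact hb'
    rw [hRb _ hna, hRb _ hnb]
    have h1 := fs _ (hb _ hna).2.2.2.2.1 _ (hb _ hnb).2.2.2.2.1
    have h2 : ‖φ a - φ b‖ ≤ ‖φ a - φ b - (a - b)‖ + ‖(a - b : ℂ)‖ := by
      have := norm_add_le (φ a - φ b - (a - b)) (a - b : ℂ)
      rwa [sub_add_cancel] at this
    have h3 : ‖(a - b : ℂ)‖ = |a - b| := by
      rw [← Complex.ofReal_sub, Complex.norm_real, Real.norm_eq_abs]
    rw [h3] at h1 h2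
    have := abs_nonneg (a - b)
    linarith
  · have hcoe : Tendsto (fun m : ℝ => (m : ℂ)) (𝓝 0) (𝓝 0) := by
      have := Complex.continuous_ofReal.tendsto 0
      simpa using this
    have hHt : Tendsto (cskH β p) (𝓝 0) (𝓝 0) := by
      have := hHa.continuousAt.tendsto
      rwa [hH0] at this
    have hn : ∀ᶠ w : ℂ in 𝓝 0, ‖w‖ < δ :=
      (isOpen_lt continuous_norm continuous_const).mem_nhds (by simpa using hδ)
    filter_upwards [hcoe.eventually fl, hcoe.eventually (hHt.eventually hn)] with m h1 h2
    rw [hRb _ h2, h1]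

end CskInverse

lemma csk_memVinf_of_R (V : ℝ → ℝ) (hV : AnalyticAt ℝ V 0) (hV0 : V 0 = 1) (R : ℂ → ℂ) (δ : ℝ)
    (hδ : 0 < δ) (hR : DifferentiableOn ℂ R (CskOmega δ))
    (hpos : ∀ w : ℂ, w.im ≠ 0 → 0 ≤ (R w).im * w.im)
    (hreal : ∀ t : ℝ, |t| < δ → (R t).im = 0) (hR0 : R 0 = 0)
    (hlip : ∀ s t : ℝ, |s| < δ → |t| < δ → ‖R s - R t‖ ≤ 2 * |s - t|)
    (hinv : ∀ᶠ m : ℝ in 𝓝 0, R ((m / V m : ℝ) : ℂ) = m) : memVinf V := by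
  intro c
  by_cases hc : c = 0
  · subst hc
    refine csk_memV_of_R _ ?_ (by simp [hV0]) id 1 one_pos differentiableOn_id ?_ ?_ rfl ?_ ?_
    · simp only [zero_mul, hV0]; exact analyticAt_const
    · intro w _; exact mul_self_nonneg _
    · intro t _; simp
    · intro s t _ _
      simp only [id]
      rw [← Complex.ofReal_sub, Complex.norm_real, Real.norm_eq_abs]
      linarith [abs_nonneg (s - t)]
    · exact Eventually.of_forall fun m => by simp [hV0]
  · have hc' : 0 < |c| := abs_pos.2 hc
    have hcc : (c : ℂ) ≠ 0 := by exact_mod_cast hc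
    have hdom : ∀ t : ℝ, |t| < δ / |c| → |c * t| < δ := by
      intro t ht
      rw [lt_div_iff₀ hc'] at ht
      rw [abs_mul]; linarith
    have hct : Tendsto (fun m : ℝ => c * m) (𝓝 0) (𝓝 0) := by
      have : ContinuousAt (fun m : ℝ => c * m) 0 := by fun_prop
      simpa using this.tendsto
    refine csk_memV_of_R _ ?_ (by simp [hV0]) (fun w => R (c * w) / c) (δ / |c|) (by positivity)
      ?_ ?_ ?_ (by simp [hR0]) ?_ ?_
    · have h1 : AnalyticAt ℝ V (c * 0) := by simpa using hV
      exact AnalyticAt.comp (f := fun m : ℝ => c * m) h1 (by fun_prop)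
    · refine DifferentiableOn.div_const ?_ _
      refine hR.comp (t := CskOmega δ) (f := fun w : ℂ => c * w) (by fun_prop) ?_
      intro w hw h
      rw [Complex.im_ofReal_mul] at h
      rw [Complex.re_ofReal_mul]
      exact hdom _ (hw ((mul_eq_zero.1 h).resolve_left hc))
    · intro w hw
      have h1 := hpos (c * w) (by rw [Complex.im_ofReal_mul]; exact mul_ne_zero hc hw)
      rw [Complex.im_ofReal_mul] at h1
      rw [Complex.div_ofReal_im]
      have e : (R (c * w)).im / c * w.im = (R (c * w)).im * (c * w.im) / (c * c) := by
        field_simp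
      rw [e]
      exact div_nonneg h1 (mul_self_nonneg c)
    · intro t ht
      have := hreal _ (hdom t ht)
      push_cast at this
      rw [Complex.div_ofReal_im, this, zero_div]
    · intro s t hs ht
      have h1 := hlip _ _ (hdom s hs) (hdom t ht)
      push_cast at h1
      rw [← sub_div, norm_div, Complex.norm_real, Real.norm_eq_abs, div_le_iff₀ hc']
      rw [← mul_sub, abs_mul] at h1
      linarith
    · filter_upwards [hct.eventually hinv] with m hm
      have e : (c : ℂ) * ((m / V (c * m) : ℝ) : ℂ) = ((c * m / V (c * m) : ℝ) : ℂ) := by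
        push_cast; ring
      rw [e, hm]
      push_cast
      field_simp

lemma csk_main {ι : Type} [Fintype ι] [Nonempty ι] (β p : ι → ℝ) (hβ : ∀ k, 0 < β k)
    (hp : ∀ k, 0 < p k) (k0 : ι) (hk0 : 1 ≤ p k0) (hmax : ∀ k, β k ≤ β k0) :
    memVinf (fun m => ∏ k, (1 + β k * m) ^ (p k)) := by
  obtain ⟨R, δ, hδ, h1, h2, h3, h4, h5, h6⟩ := csk_exists_R β p hβ hp k0 hk0 hmax
  refine csk_memVinf_of_R _ ?_ (by simp) R δ hδ h1 h2 h3 h4 h5 ?_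
  · refine Finset.analyticAt_fun_prod _ fun k _ => ?_
    have hlog : AnalyticAt ℝ (fun m : ℝ => Real.log (1 + β k * m)) 0 :=
      AnalyticAt.log (by fun_prop) (by simp)
    have hexp : AnalyticAt ℝ (fun m : ℝ => Real.exp (Real.log (1 + β k * m) * p k)) 0 :=
      (hlog.mul analyticAt_const).rexp
    refine hexp.congr ?_
    have hc : ContinuousAt (fun m : ℝ => 1 + β k * m) 0 := by fun_prop
    have hev : ∀ᶠ m : ℝ in 𝓝 0, 0 < 1 + β k * m := hc.eventually (lt_mem_nhds (by simp))
    filter_upwards [hev] with m hm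
    rw [Real.rpow_def_of_pos hm]
  · have hpos : ∀ k, ∀ᶠ m : ℝ in 𝓝 0, 0 < 1 + β k * m := by
      intro k
      have : ContinuousAt (fun m : ℝ => 1 + β k * m) 0 := by fun_prop
      exact this.eventually (lt_mem_nhds (by simp))
    filter_upwards [h6, eventually_all.2 hpos] with m hm hk
    rw [← hm]
    congr 1
    rw [cskH, div_eq_mul_inv, Complex.ofReal_mul, Complex.exp_neg, Complex.ofReal_inv,
      Complex.exp_sum, Complex.ofReal_prod]
    congr 2
    refine Finset.prod_congr rfl fun k _ => ?_
    rw [Real.rpow_def_of_pos (hk k), Complex.ofReal_exp, Complex.ofReal_mul,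
      Complex.ofReal_log (hk k).le, mul_comm]
    push_cast
    rfl

end CskProof

/-- If `βⱼ, pⱼ > 0` with `max{pⱼ, 1/βⱼ} ≥ 1` for each `j`, then
`V(m) = (1+m)·∏ⱼ (1+βⱼm)^{pⱼ}` is in `𝒱∞`. -/
theorem product_rpow_memVinf (d : ℕ) (hd : 1 ≤ d) (β p : Fin d → ℝ)
    (hβ : ∀ j, 0 < β j) (hp : ∀ j, 0 < p j)
    (hmax : ∀ j, 1 ≤ max (p j) (β j)⁻¹) :
    memVinf (fun m => (1 + m) * ∏ j, (1 + β j * m) ^ (p j)) := by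
  have key : ∀ k0 : Option (Fin d), 1 ≤ (k0.elim 1 p : ℝ) →
      (∀ k : Option (Fin d), (k.elim 1 β : ℝ) ≤ k0.elim 1 β) →
      memVinf (fun m => (1 + m) * ∏ j, (1 + β j * m) ^ (p j)) := by
    intro k0 h1 h2
    have := csk_main (fun k : Option (Fin d) => (k.elim 1 β : ℝ)) (fun k => (k.elim 1 p : ℝ))
      (by rintro (_ | k); exacts [one_pos, hβ k]) (by rintro (_ | k); exacts [one_pos, hp k])
      k0 h1 h2
    simpa [Fintype.prod_option] using this
  obtain ⟨k0, hk0⟩ := Finite.exists_max (fun k : Option (Fin d) => (k.elim 1 β : ℝ))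
  rcases k0 with _ | j
  · exact key none (by simp) hk0
  · have h1 : 1 ≤ β j := hk0 none
    rcases h1.lt_or_eq with h | h
    · refine key (some j) ?_ hk0
      rcases le_max_iff.1 (hmax j) with h' | h'
      · exact h'
      · exact absurd h' (inv_lt_one_of_one_lt₀ h).not_ge
    · refine key none (by simp) ?_
      exact fun k => (hk0 k).trans h.ge
end
end
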